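/- arXiv:2411.07125 — 4 statements merged into one kernel-verified Lean document; each statement's English description precedes it below -/
import Mathlib

section
/- Let n be a prime, k ≥ 1, and let m, r be natural numbers with 1 ≤ m < n. Let Y'_m = {y ∈ ℤ^k : |y_i| ≤ m for all i}. If l_1,…,l_k are independent uniform random elements of ZMod n, then the probability that there exists y ∈ Y'_m \ {0} with d(f_l(y), 0) ≤ r is at most ((2m+1)^k − 1) · (2r+1) / n. -/
/-!
The bound is a union bound over the `(2m+1)^k - 1` nonzero points `y` of the box `|y_i| ≤ m`.
For each such `y` some coordinate `y_j` is nonzero modulo the prime `n`, because `0 < |y_j| ≤ m < n`.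
Then `l ↦ (f_l(y), (l_i)_{i ≠ j})` is injective, so `f_l(y)` lands in a set `S` for at most
`|S| * n^(k-1)` of the `l` (`card_linear_form_mem_le`). The set in question is the ball of radius
`r` around `0` in the cycle distance, which has at most `2r+1` elements (`card_cycleBall_le`).
-/

open scoped BigOperators

noncomputable section

attribute [local instance 10] Classical.propDecidable

/-- Cycle distance on `ZMod n`: `min(ρ, n - ρ)` where `ρ` is the representative of `y - x`. -/
def cycleDist (n : ℕ) [NeZero n] (x y : ZMod n) : ℕ :=
  min (y - x).val (n - (y - x).val)

theorem card_cycleBall_le (n : ℕ) [NeZero n] (r : ℕ) :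
    (Finset.univ.filter (fun z : ZMod n => cycleDist n z 0 ≤ r)).card ≤ 2 * r + 1 := by
  have hsub : Finset.univ.filter (fun z : ZMod n => cycleDist n z 0 ≤ r) ⊆
      (Finset.Icc (-(r : ℤ)) r).image (fun t : ℤ => (t : ZMod n)) := by
    intro z hz
    simp only [Finset.mem_filter, Finset.mem_univ, true_and, cycleDist, min_le_iff] at hz
    have hv : (((0 - z).val : ℕ) : ZMod n) = 0 - z := ZMod.natCast_zmod_val _
    have hlt : (0 - z).val < n := ZMod.val_lt _
    rw [Finset.mem_image]
    -- `z` is represented by `-v` and by `n - v`, where `v` is the representative of `-z`.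
    rcases hz with h | h
    · refine ⟨-((0 - z).val : ℤ), Finset.mem_Icc.2 ⟨by omega, by omega⟩, ?_⟩
      push_cast
      rw [hv]
      ring
    · refine ⟨(n : ℤ) - ((0 - z).val : ℤ), Finset.mem_Icc.2 ⟨by omega, by omega⟩, ?_⟩
      push_cast
      rw [hv, ZMod.natCast_self]
      ring
  refine (Finset.card_le_card hsub).trans (Finset.card_image_le.trans ?_)
  rw [Int.card_Icc]
  omega

/-- A linear form with some nonzero coefficient `a j` takes values in `S` on at most
`|S| * n^(k-1)` points: the coordinate `l j` is determined by the value and the others. -/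
theorem card_linear_form_mem_le (k n : ℕ) [NeZero n] (hn : n.Prime) (a : Fin k → ZMod n)
    (j : Fin k) (ha : a j ≠ 0) (S : Finset (ZMod n)) :
    (Finset.univ.filter (fun l : Fin k → ZMod n => ∑ i, a i * l i ∈ S)).card
      ≤ S.card * n ^ (k - 1) := by
  haveI : Fact n.Prime := ⟨hn⟩
  have hcard : (S ×ˢ (Finset.univ : Finset ({i : Fin k // i ≠ j} → ZMod n))).card
      = S.card * n ^ (k - 1) := by
    rw [Finset.card_product, Finset.card_univ, Fintype.card_fun, ZMod.card]
    congr 2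
    simp [Fintype.card_subtype_compl]
  rw [← hcard]
  refine Finset.card_le_card_of_injOn
    (fun l => (∑ i, a i * l i, fun i : {i : Fin k // i ≠ j} => l i)) ?_ ?_
  · intro l hl
    simpa using hl
  · intro l _ l' _ h
    simp only [Prod.mk.injEq] at h
    obtain ⟨h1, h2⟩ := h
    have hne : ∀ i, i ≠ j → l i = l' i := fun i hi => congrFun h2 ⟨i, hi⟩
    rw [← Finset.add_sum_erase _ _ (Finset.mem_univ j),
      ← Finset.add_sum_erase _ (fun i => a i * l' i) (Finset.mem_univ j),
      Finset.sum_congr rfl (fun i hi => by rw [hne i (Finset.ne_of_mem_erase hi)])] at h1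
    have hj : l j = l' j := mul_left_cancel₀ ha (add_right_cancel h1)
    funext i
    by_cases hi : i = j
    · rw [hi, hj]
    · exact hne i hi

/-- for prime `n`, `1 ≤ m < n` and `r : ℕ`, the probability over independent
uniform `l₁,…,l_k` (modelled as a uniform element of the product space) that some nonzero
`y` with `|y_i| ≤ m` has `d(f_l(y), 0) ≤ r` is at most `((2m+1)^k - 1)(2r+1)/n`. -/
theorem union_bound_near_zero (k : ℕ) (hk : 1 ≤ k) (n : ℕ) [NeZero n] (hn : n.Prime)
    (m r : ℕ) (hm1 : 1 ≤ m) (hmn : m < n) :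
    ((Finset.univ.filter (fun l : Fin k → ZMod n =>
        ∃ y : Fin k → ℤ, y ≠ 0 ∧ (∀ i, |y i| ≤ (m : ℤ)) ∧
          cycleDist n (∑ i, (y i : ZMod n) * l i) 0 ≤ r)).card : ℝ) /
      (Fintype.card (Fin k → ZMod n) : ℝ)
      ≤ ((2 * (m : ℝ) + 1) ^ k - 1) * (2 * (r : ℝ) + 1) / (n : ℝ) := by
  set box : Finset (Fin k → ℤ) :=
    (Fintype.piFinset (fun _ : Fin k => Finset.Icc (-(m : ℤ)) m)).erase 0 with hbox
  set ball := Finset.univ.filter (fun z : ZMod n => cycleDist n z 0 ≤ r) with hball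
  have hboxcard : (box.card : ℝ) = (2 * (m : ℝ) + 1) ^ k - 1 := by
    have h0 : (0 : Fin k → ℤ) ∈ Fintype.piFinset (fun _ : Fin k => Finset.Icc (-(m : ℤ)) m) := by
      simp [Fintype.mem_piFinset]
    have h1 := Finset.card_erase_add_one h0
    rw [← hbox, Fintype.card_piFinset_const, Int.card_Icc,
      show ((m : ℤ) + 1 - -(m : ℤ)).toNat = 2 * m + 1 by omega] at h1
    have h2 : ((box.card + 1 : ℕ) : ℝ) = ((2 * m + 1) ^ k : ℕ) := by rw [h1]
    push_cast at h2
    linarith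
  have hcount : (Finset.univ.filter (fun l : Fin k → ZMod n =>
        ∃ y : Fin k → ℤ, y ≠ 0 ∧ (∀ i, |y i| ≤ (m : ℤ)) ∧
          cycleDist n (∑ i, (y i : ZMod n) * l i) 0 ≤ r)).card
      ≤ box.card * ((2 * r + 1) * n ^ (k - 1)) := by
    have hsub : Finset.univ.filter (fun l : Fin k → ZMod n =>
        ∃ y : Fin k → ℤ, y ≠ 0 ∧ (∀ i, |y i| ≤ (m : ℤ)) ∧
          cycleDist n (∑ i, (y i : ZMod n) * l i) 0 ≤ r) ⊆
        box.biUnion (fun y => Finset.univ.filter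
          (fun l : Fin k → ZMod n => ∑ i, (y i : ZMod n) * l i ∈ ball)) := by
      intro l hl
      obtain ⟨y, hy0, hy, hd⟩ := (Finset.mem_filter.1 hl).2
      refine Finset.mem_biUnion.2 ⟨y, Finset.mem_erase.2 ⟨hy0, Fintype.mem_piFinset.2
        fun i => Finset.mem_Icc.2 (abs_le.1 (hy i))⟩, ?_⟩
      simpa [hball] using hd
    refine (Finset.card_le_card hsub).trans (Finset.card_biUnion_le_card_mul _ _ _ ?_)
    intro y hy
    obtain ⟨hy0, hy⟩ := Finset.mem_erase.1 hy
    obtain ⟨j, hj⟩ := Function.ne_iff.1 hy0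
    have hyj := Finset.mem_Icc.1 (Fintype.mem_piFinset.1 hy j)
    have ha : ((y j : ℤ) : ZMod n) ≠ 0 := by
      rw [Ne, ZMod.intCast_zmod_eq_zero_iff_dvd]
      intro hdvd
      refine hj (Int.eq_zero_of_abs_lt_dvd hdvd ?_)
      rw [abs_lt]
      omega
    exact (card_linear_form_mem_le k n hn (fun i => (y i : ZMod n)) j ha ball).trans
      (Nat.mul_le_mul_right _ (card_cycleBall_le n r))
  have hn0 : (0 : ℝ) < n := by exact_mod_cast hn.pos
  have hpow : (n : ℝ) ^ k = n ^ (k - 1) * n := by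
    rw [← pow_succ, Nat.sub_add_cancel hk]
  rw [Fintype.card_fun, ZMod.card, Fintype.card_fin, Nat.cast_pow, hpow, ← hboxcard,
    div_le_div_iff₀ (by positivity) hn0]
  have hcount' := (Nat.cast_le (α := ℝ)).2 hcount
  push_cast at hcount'
  calc _ ≤ _ := mul_le_mul_of_nonneg_right hcount' hn0.le
    _ = _ := by ring
end
end

section
/- For every δ₁ with 0 < δ₁ < 1 there exist α₁ > 0 and N ∈ ℕ such that for every n ≥ N, with probability at least 1 − δ₁ over the random l: for every sign pattern b ∈ {−1,1}^k and every pair of distinct points y, y' ∈ Y_m^b, the cycle distance satisfies d(f_l(y), f_l(y')) > α₁ · s. -/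
/-!
The proof is a union bound over the difference `z = y' - y`. Since both points lie in the same
orthant, `z` is a nonzero vector with all coordinates in `(-m, m)`, so there are at most `(2m)^k`
such vectors, whatever the sign pattern.

Fix such a `z` and a coordinate `i` with `z i ≠ 0`, and freeze all `l j` with `j ≠ i`. Then `f_l(z)`
is an affine function `a + z i * x` of `x = l i`. As `x` runs over `{0, …, n-1}`, the integer
`a + z i * x` runs through an arithmetic progression of step `z i` that winds `O(|z i|)` times around
the cycle, and each winding meets the arc of points at distance at most `T` from `0` in at most
`2T / |z i| + 1` points. Hence at most `10 T + 5 |z i|` values of `x` are bad (`card_affine_le`).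

Taking `T = α s` and summing, the failure probability is at most
`(2m)^k (10 α s + 5 m) / n = 10 · 2^k α + 5 · 2^k m^(k+1) / n`. The first term is made small by the
choice of `α`; the second is `O(n^(-1/2))`, because `m^(k+1) = O(n^(1/2))`.
-/

open scoped BigOperators

noncomputable section

attribute [local instance 10] Classical.propDecidable

/-- `f_l(y) = Σ yᵢ lᵢ` in `ZMod n`. -/
def fl {n k : ℕ} [NeZero n] (l : Fin k → ZMod n) (y : Fin k → ℤ) : ZMod n :=
  ∑ i, (y i : ZMod n) * l i

/-- Probability of `E` when `l₁,…,l_k` are independent uniform elements of `ZMod n`,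
modelled as a uniform element of the product space. -/
def lProb (n k : ℕ) [NeZero n] (E : (Fin k → ZMod n) → Prop) : ℝ :=
  ((Finset.univ.filter E).card : ℝ) / (Fintype.card (Fin k → ZMod n) : ℝ)

/-- `b` is a sign pattern in `{-1,1}^k`. -/
def IsSign {k : ℕ} (b : Fin k → ℤ) : Prop := ∀ i, b i = 1 ∨ b i = -1

/-- Membership in `Y_m^b = {y ∈ ℤ^k : 0 ≤ bᵢ yᵢ < m}`. -/
def inYmb {k : ℕ} (b : Fin k → ℤ) (m : ℕ) (y : Fin k → ℤ) : Prop :=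
  ∀ i, 0 ≤ b i * y i ∧ b i * y i < (m : ℤ)

/-- `m = m(n) = ⌈c n^{1/(2k+2)}⌉`. -/
def mOf (k : ℕ) (c : ℝ) (n : ℕ) : ℕ := ⌈c * (n : ℝ) ^ ((1 : ℝ) / (2 * (k : ℝ) + 2))⌉₊

/-- The standard distance `s = s(n) = n / m^k`. -/
def sOf (k : ℕ) (c : ℝ) (n : ℕ) : ℝ := (n : ℝ) / (mOf k c n : ℝ) ^ k

theorem cycleDist_fl {n k : ℕ} [NeZero n] (l : Fin k → ZMod n) (y y' : Fin k → ℤ) :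
    cycleDist n (fl l y) (fl l y') = (fl l (y' - y)).valMinAbs.natAbs := by
  rw [ZMod.valMinAbs_natAbs_eq_min, cycleDist]
  have : fl l y' - fl l y = fl l (y' - y) := by
    simp [fl, sub_mul, Finset.sum_sub_distrib]
  rw [this]

/-- An affine map `x ↦ a + z x` on `ZMod n` with integer slope `z ≠ 0` takes values within cycle
distance `T` of `0` at most `10 T + 5 |z|` times. -/
theorem card_affine_le {n : ℕ} [NeZero n] (z : ℤ) (hz : z ≠ 0) (a : ZMod n) (T : ℕ) :
    (Finset.univ.filter
      (fun x : ZMod n => (a + (z : ZMod n) * x).valMinAbs.natAbs ≤ T)).card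
      ≤ 10 * T + 5 * z.natAbs := by
  have hn : 0 < n := Nat.pos_of_ne_zero (NeZero.ne n)
  set w := z.natAbs with hw
  have hw0 : 0 < w := Int.natAbs_pos.mpr hz
  set r : ZMod n → ℤ := fun x => (a + (z : ZMod n) * x).valMinAbs with hr
  -- `q x` is the winding number: the lift `a + z x` equals `n q + r` with `r` minimal.
  have hq : ∀ x : ZMod n, ∃ q : ℤ, (a.val : ℤ) + z * (x.val : ℤ) - r x = n * q := by
    intro x
    have : ((((a.val : ℤ) + z * (x.val : ℤ) - r x : ℤ)) : ZMod n) = 0 := by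
      simp [hr]
    exact (ZMod.intCast_zmod_eq_zero_iff_dvd _ n).mp this
  choose q hq using hq
  have hcard : (Finset.univ.filter
      (fun x : ZMod n => (a + (z : ZMod n) * x).valMinAbs.natAbs ≤ T)).card
      ≤ (Finset.Icc (-(w : ℤ) - 1) (w + 1) ×ˢ Finset.Icc (0 : ℤ) ((2 * T / w : ℕ) : ℤ)).card := by
    apply Finset.card_le_card_of_injOn (fun x => (q x, (r x + T) / (w : ℤ)))
    · intro x hx
      have hx' : (r x).natAbs ≤ T := by simpa using hx
      have hrT : -(T : ℤ) ≤ r x ∧ r x ≤ T := by omega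
      have hrn : (r x).natAbs ≤ n / 2 := ZMod.natAbs_valMinAbs_le _
      have hrn' : -(n : ℤ) ≤ r x ∧ r x ≤ n := by omega
      have hA : (a.val : ℤ) < n := by exact_mod_cast ZMod.val_lt a
      have hX : (x.val : ℤ) < n := by exact_mod_cast ZMod.val_lt x
      have hzx : |z * (x.val : ℤ)| ≤ w * (n - 1) := by
        rw [abs_mul, Int.abs_eq_natAbs z, abs_of_nonneg (by positivity : (0 : ℤ) ≤ x.val)]
        exact mul_le_mul_of_nonneg_left (by omega) (by positivity)
      have hzx' := abs_le.mp hzx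
      have hnq := hq x
      have hnZ : (0 : ℤ) < n := by exact_mod_cast hn
      have hwZ : (0 : ℤ) < w := by exact_mod_cast hw0
      have h1 : q x < w + 2 := by
        by_contra! hcon
        nlinarith [mul_le_mul_of_nonneg_left hcon hnZ.le]
      have h2 : -(w : ℤ) - 2 < q x := by
        by_contra! hcon
        nlinarith [mul_le_mul_of_nonneg_left hcon hnZ.le]
      simp only [Finset.coe_product, Finset.coe_Icc, Set.mem_prod, Set.mem_Icc]
      refine ⟨⟨by omega, by omega⟩, Int.ediv_nonneg (by omega) (by omega), ?_⟩
      push_cast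
      exact Int.ediv_le_ediv hwZ (by omega)
    · -- Equal winding numbers and equal blocks of length `w` force `|z (x - x')| < |z|`.
      intro x _ x' _ hxx
      simp only [Prod.mk.injEq] at hxx
      obtain ⟨hq', hd⟩ := hxx
      have hwZ : (0 : ℤ) < w := by exact_mod_cast hw0
      have e1 := Int.emod_add_mul_ediv (r x + T) w
      have e2 := Int.emod_add_mul_ediv (r x' + T) w
      have m1 := Int.emod_nonneg (r x + T) hwZ.ne'
      have m2 := Int.emod_nonneg (r x' + T) hwZ.ne'
      have m3 := Int.emod_lt_of_pos (r x + T) hwZ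
      have m4 := Int.emod_lt_of_pos (r x' + T) hwZ
      rw [hd] at e1
      have hqx := hq x
      have hqx' := hq x'
      rw [hq'] at hqx
      have hdiff : z * ((x.val : ℤ) - x'.val) = r x - r x' := by linarith
      have habs : |z * ((x.val : ℤ) - x'.val)| < w := by
        rw [hdiff, abs_lt]; constructor <;> linarith
      rw [abs_mul, Int.abs_eq_natAbs z, ← hw] at habs
      have : |(x.val : ℤ) - x'.val| < 1 := by
        by_contra! hcon
        nlinarith
      have h0 := Int.abs_lt_one_iff.mp this
      exact ZMod.val_injective n (by omega)
  refine hcard.trans ?_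
  rw [Finset.card_product, Int.card_Icc, Int.card_Icc]
  have e1 : ((w : ℤ) + 1 + 1 - (-(w : ℤ) - 1)).toNat = 2 * w + 3 := by omega
  have e2 : (((2 * T / w : ℕ) : ℤ) + 1 - 0).toNat = 2 * T / w + 1 := by
    generalize 2 * T / w = u
    omega
  rw [e1, e2]
  have := Nat.mul_div_le (2 * T) w
  calc (2 * w + 3) * (2 * T / w + 1) ≤ (5 * w) * (2 * T / w + 1) :=
        Nat.mul_le_mul_right _ (by omega)
    _ = 5 * (w * (2 * T / w)) + 5 * w := by ring
    _ ≤ _ := by omega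

/-- The bound of `card_affine_le` applied to one coordinate `l i` with `z i ≠ 0`, for each of the
`n ^ (k - 1)` choices of the remaining coordinates. -/
theorem card_bad_le {n k : ℕ} [NeZero n] (m : ℕ) (z : Fin k → ℤ) (hz : z ≠ 0)
    (hzm : ∀ i, (z i).natAbs ≤ m) (T : ℕ) :
    (Finset.univ.filter
      (fun l : Fin k → ZMod n => (fl l z).valMinAbs.natAbs ≤ T)).card
      ≤ (10 * T + 5 * m) * n ^ (k - 1) := by
  obtain ⟨i, hi⟩ := Function.ne_iff.mp hz
  simp only [Pi.zero_apply] at hi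
  set f : (Fin k → ZMod n) → ({j // j ≠ i} → ZMod n) := fun l j => l j with hf
  set S := Finset.univ.filter
      (fun l : Fin k → ZMod n => (fl l z).valMinAbs.natAbs ≤ T) with hS
  have hfib : ∀ b ∈ S.image f, (S.filter (fun l => f l = b)).card ≤ 10 * T + 5 * m := by
    intro b _
    set a : ZMod n := ∑ j : {j // j ≠ i}, (z j : ZMod n) * b j with ha
    have hflz : ∀ l, f l = b → fl l z = a + (z i : ZMod n) * l i := by
      intro l hl
      rw [fl, Fintype.sum_eq_add_sum_subtype_ne _ i, add_comm, ha, ← hl]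
    calc (S.filter (fun l => f l = b)).card
        ≤ (Finset.univ.filter
          (fun x : ZMod n => (a + (z i : ZMod n) * x).valMinAbs.natAbs ≤ T)).card := by
          apply Finset.card_le_card_of_injOn (fun l => l i)
          · intro l hl
            simp only [hS, Finset.coe_filter, Finset.mem_filter, Finset.mem_univ, true_and,
              Set.mem_ofPred_eq] at hl ⊢
            rw [← hflz l hl.2]
            exact hl.1
          · intro l hl l' hl' hll
            simp only [Finset.coe_filter, Set.mem_ofPred_eq] at hl hl'
            funext j
            by_cases hj : j = i
            · subst hj; exact hll
            · exact congrFun (hl.2.trans hl'.2.symm) ⟨j, hj⟩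
      _ ≤ 10 * T + 5 * (z i).natAbs := card_affine_le _ hi _ _
      _ ≤ 10 * T + 5 * m := by have := hzm i; omega
  refine (Finset.card_le_mul_card_image S _ hfib).trans (Nat.mul_le_mul_left _ ?_)
  calc (S.image f).card ≤ Fintype.card ({j // j ≠ i} → ZMod n) := Finset.card_le_univ _
    _ = n ^ (k - 1) := by
      rw [Fintype.card_fun, ZMod.card, Fintype.card_subtype_compl, Fintype.card_fin,
        Fintype.card_subtype_eq]

/-- Union bound over all nonzero difference vectors with coordinates in `(-m, m)`. -/
theorem card_union_le {n k : ℕ} [NeZero n] (m T : ℕ) :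
    (Finset.univ.filter (fun l : Fin k → ZMod n => ∃ z : Fin k → ℤ, z ≠ 0 ∧
      (∀ i, -(m : ℤ) < z i ∧ z i < m) ∧ (fl l z).valMinAbs.natAbs ≤ T)).card
      ≤ (2 * m) ^ k * ((10 * T + 5 * m) * n ^ (k - 1)) := by
  set Z := (Fintype.piFinset (fun _ : Fin k => Finset.Ioo (-(m : ℤ)) m)).filter (· ≠ 0) with hZ
  have hsub : (Finset.univ.filter (fun l : Fin k → ZMod n => ∃ z : Fin k → ℤ, z ≠ 0 ∧
      (∀ i, -(m : ℤ) < z i ∧ z i < m) ∧ (fl l z).valMinAbs.natAbs ≤ T)) ⊆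
      Z.biUnion (fun z => Finset.univ.filter
        (fun l : Fin k → ZMod n => (fl l z).valMinAbs.natAbs ≤ T)) := by
    intro l hl
    simp only [Finset.mem_filter, Finset.mem_univ, true_and] at hl
    obtain ⟨z, hz, hzm, hT⟩ := hl
    simp only [Finset.mem_biUnion, hZ, Finset.mem_filter, Fintype.mem_piFinset, Finset.mem_Ioo,
      Finset.mem_univ, true_and]
    exact ⟨z, ⟨hzm, hz⟩, hT⟩
  have hZc : Z.card ≤ (2 * m) ^ k := by
    refine (Finset.card_filter_le _ _).trans ?_
    rw [Fintype.card_piFinset_const, Int.card_Ioo]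
    exact Nat.pow_le_pow_left (by omega) k
  refine (Finset.card_le_card hsub).trans ((Finset.card_biUnion_le_card_mul _ _
    ((10 * T + 5 * m) * n ^ (k - 1)) ?_).trans (Nat.mul_le_mul_right _ hZc))
  intro z hz
  simp only [hZ, Finset.mem_filter, Fintype.mem_piFinset, Finset.mem_Ioo] at hz
  exact card_bad_le m z hz.2 (fun i => by have := hz.1 i; omega) T

theorem mOf_pow_le (k : ℕ) (c : ℝ) (hc : 0 < c) (n : ℕ) (hn : 1 ≤ n) :
    (mOf k c n : ℝ) ^ (k + 1) ≤ (c + 1) ^ (k + 1) * Real.sqrt n := by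
  set x : ℝ := (n : ℝ) ^ ((1 : ℝ) / (2 * (k : ℝ) + 2)) with hx
  have hn' : (1 : ℝ) ≤ n := by exact_mod_cast hn
  have hx1 : 1 ≤ x := Real.one_le_rpow hn' (by positivity)
  have hm : (mOf k c n : ℝ) ≤ (c + 1) * x := by
    have := (Nat.ceil_lt_add_one (a := c * x) (by positivity)).le
    rw [mOf]
    linarith
  have hxp : x ^ (k + 1) = Real.sqrt n := by
    rw [hx, ← Real.rpow_natCast, ← Real.rpow_mul (by positivity), Real.sqrt_eq_rpow]
    congr 1
    push_cast
    field_simp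
  calc (mOf k c n : ℝ) ^ (k + 1) ≤ ((c + 1) * x) ^ (k + 1) :=
        pow_le_pow_left₀ (by positivity) hm _
    _ = _ := by rw [mul_pow, hxp]

/-- for every `0 < δ₁ < 1` there are `α₁ > 0` and `N` such that for all
`n ≥ N`, with probability at least `1 - δ₁` over `l`: for every sign pattern `b` and all
distinct `y, y' ∈ Y_m^b`, `d(f_l(y), f_l(y')) > α₁ s`. -/
theorem mapped_points_not_too_close (k : ℕ) (hk : 1 ≤ k) (c : ℝ) (hc : 0 < c)
    (δ₁ : ℝ) (h0 : 0 < δ₁) (h1 : δ₁ < 1) :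
    ∃ α₁ : ℝ, 0 < α₁ ∧ ∃ N : ℕ, ∀ (n : ℕ) [NeZero n], N ≤ n →
      1 - δ₁ ≤ lProb n k (fun l =>
        ∀ b : Fin k → ℤ, IsSign b →
          ∀ y y' : Fin k → ℤ, inYmb b (mOf k c n) y → inYmb b (mOf k c n) y' → y ≠ y' →
            α₁ * sOf k c n < (cycleDist n (fl l y) (fl l y') : ℝ)) := by
  have hA : (0 : ℝ) < 2 ^ k := by positivity
  set α : ℝ := δ₁ / (20 * 2 ^ k) with hα
  set B : ℝ := 10 * 2 ^ k * (c + 1) ^ (k + 1) / δ₁ with hB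
  have hBpos : 0 < B := by positivity
  refine ⟨α, by positivity, ⌈B ^ 2⌉₊, ?_⟩
  intro n _ hn
  have hn1 : 1 ≤ n := Nat.pos_of_ne_zero (NeZero.ne n)
  have hn0 : (0 : ℝ) < n := by exact_mod_cast hn1
  set m := mOf k c n with hm
  have hm0 : 0 < m := Nat.ceil_pos.mpr (by positivity)
  have hmR : (0 : ℝ) < m := by exact_mod_cast hm0
  have hs0 : 0 ≤ α * sOf k c n := by unfold sOf; positivity
  set T := ⌊α * sOf k c n⌋₊ with hT
  have hTle : (T : ℝ) ≤ α * sOf k c n := Nat.floor_le hs0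
  set E : (Fin k → ZMod n) → Prop := fun l =>
        ∀ b : Fin k → ℤ, IsSign b →
          ∀ y y' : Fin k → ℤ, inYmb b m y → inYmb b m y' → y ≠ y' →
            α * sOf k c n < (cycleDist n (fl l y) (fl l y') : ℝ) with hE
  have hbad : (Finset.univ.filter (fun l => ¬ E l)).card
      ≤ (2 * m) ^ k * ((10 * T + 5 * m) * n ^ (k - 1)) := by
    refine (Finset.card_le_card ?_).trans (card_union_le m T)
    intro l hl
    simp only [Finset.mem_filter, Finset.mem_univ, true_and, hE] at hl ⊢
    push Not at hl
    obtain ⟨b, hb, y, y', hy, hy', hne, hd⟩ := hl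
    refine ⟨y' - y, sub_ne_zero.mpr hne.symm, ?_, ?_⟩
    · intro i
      have h1 := hy i
      have h2 := hy' i
      simp only [Pi.sub_apply]
      rcases hb i with h | h <;> rw [h] at h1 h2 <;> constructor <;> linarith
    · rw [← cycleDist_fl]
      exact Nat.le_floor hd
  have hsum : ((Finset.univ.filter E).card : ℝ) + ((Finset.univ.filter (fun l => ¬ E l)).card : ℝ)
      = (n : ℝ) ^ k := by
    have := Finset.card_filter_add_card_filter_not (s := (Finset.univ : Finset (Fin k → ZMod n))) E
    rw [Finset.card_univ, Fintype.card_fun, ZMod.card, Fintype.card_fin] at this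
    exact_mod_cast this
  have hbadR : ((Finset.univ.filter (fun l => ¬ E l)).card : ℝ)
      ≤ (2 * m) ^ k * ((10 * T + 5 * m) * n ^ (k - 1)) := by exact_mod_cast hbad
  have hnk : (n : ℝ) ^ k = n * n ^ (k - 1) := by
    rw [← pow_succ', Nat.sub_add_cancel hk]
  -- The union bound divided by `n ^ (k - 1)`.
  have hkey : (2 * (m : ℝ)) ^ k * (10 * T + 5 * m) ≤ δ₁ * n := by
    have hfirst : (2 * (m : ℝ)) ^ k * (10 * T) ≤ δ₁ / 2 * n := by
      calc (2 * (m : ℝ)) ^ k * (10 * T) ≤ (2 * (m : ℝ)) ^ k * (10 * (α * sOf k c n)) := by gcongr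
        _ = δ₁ / 2 * n := by
          rw [sOf, ← hm, hα, mul_pow]
          field_simp
          norm_num
    have hsecond : (2 * (m : ℝ)) ^ k * (5 * m) ≤ δ₁ / 2 * n := by
      have hBn : B ≤ Real.sqrt n := by
        apply Real.le_sqrt_of_sq_le
        exact (Nat.le_ceil _).trans (by exact_mod_cast hn)
      have hBd : B * δ₁ = 10 * 2 ^ k * (c + 1) ^ (k + 1) := by
        rw [hB]; field_simp
      calc (2 * (m : ℝ)) ^ k * (5 * m) = 5 * 2 ^ k * (m : ℝ) ^ (k + 1) := by
            rw [mul_pow]; ring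
        _ ≤ 5 * 2 ^ k * ((c + 1) ^ (k + 1) * Real.sqrt n) := by
            gcongr
            exact mOf_pow_le k c hc n hn1
        _ = δ₁ / 2 * (B * Real.sqrt n) := by linear_combination (-(Real.sqrt n) / 2) * hBd
        _ ≤ δ₁ / 2 * (Real.sqrt n * Real.sqrt n) := by gcongr
        _ = δ₁ / 2 * n := by rw [Real.mul_self_sqrt hn0.le]
    linarith
  have hfinal : ((Finset.univ.filter (fun l => ¬ E l)).card : ℝ) ≤ δ₁ * (n : ℝ) ^ k := by
    calc _ ≤ (2 * (m : ℝ)) ^ k * ((10 * T + 5 * m) * n ^ (k - 1)) := hbadR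
      _ = (2 * (m : ℝ)) ^ k * (10 * T + 5 * m) * n ^ (k - 1) := by ring
      _ ≤ δ₁ * n * n ^ (k - 1) := by gcongr
      _ = _ := by rw [hnk]; ring
  have hcard : (Fintype.card (Fin k → ZMod n) : ℝ) = (n : ℝ) ^ k := by
    rw [Fintype.card_fun, ZMod.card, Fintype.card_fin]; push_cast; rfl
  rw [lProb, hcard, le_div_iff₀ (by positivity)]
  linarith
end
end

section
/- For every δ₂ with 0 < δ₂ < 1 there exist constants α₁ > 0, α₂ < ∞ and N ∈ ℕ such that for every n ≥ N, with probability at least 1 − δ₂ over the random l: for every sign pattern b ∈ {−1,1}^k there exists y ∈ Y_m^b with y ≠ 0 such that α₁ · s < d(f_l(y), 0) ≤ α₂ · s. -/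
/-!
The theorem follows from two counting estimates over the `n ^ k` choices of `l`. Both rest on
`window_count`: for a fixed nonzero `y` with `|y i| ≤ m`, the value `f_l(y)` falls into a window of
`W` consecutive residues with probability at most `(W + m) / n`, for every `n`, prime or not. The
choice of `m` makes `m ^ (k + 1) = o(n)`, so the error `m / n` is negligible even after summing over
`m ^ k` points.

*Lower bound.* By the union bound over all nonzero `y` in `(-m, m)^k` (`near_zero_count`), with high
probability no such `y` has `d(f_l(y), 0) ≤ α₁ s`.

*Upper bound.* Let `M = ⌊m / 2⌋`, `w = ⌈α₂ s⌉`, and let `B` be the union of the windows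
`f_l(a) + {0, …, w - 1}` for `a` in `[0, M)^k`. If `|B| > n / 2`, then for every sign pattern `b` the
set `B` meets its translate by `f_l(M b)`, which gives `a, a'` with
`d(f_l(M b + a' - a), 0) < w`; the point `y = M b + a' - a` satisfies `0 < b i * y i < 2 M ≤ m`
(`exists_point_of_covered`). That `|B| > n / 2` with high probability is a second-moment estimate:
by Cauchy–Schwarz `|B|` is large when the windows have few collisions, and the expected number of
collisions is controlled by `window_count` applied to the differences `a - a'`
(`not_covered_count`). All sign patterns are thus treated by a single event.
-/

open scoped BigOperators

noncomputable section

attribute [local instance 10] Classical.propDecidable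

/-! ### Counting solutions of linear congruences -/

/-- With `g = gcd(q, n)`, each solvable congruence `q x ≡ v (mod n)` has at most `g` solutions,
and the solvable right-hand sides lie in one class modulo `g`; hence the error term `g ≤ m`. -/
lemma sum_card_mul_eq_le {n : ℕ} [NeZero n] (q : ℤ) (hq : q ≠ 0) (m : ℕ) (hm : q.natAbs ≤ m)
    (r : ZMod n) (W : ℕ) :
    ∑ j ∈ Finset.range W, (Finset.univ.filter (fun x : ZMod n => (q : ZMod n) * x = r + j)).card
      ≤ W + m := by
  obtain ⟨g, hg⟩ : ∃ g, g = Int.gcd q n := ⟨_, rfl⟩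
  have hg0 : 0 < g := by rw [hg]; exact Int.gcd_pos_of_ne_zero_left _ hq
  have hgm : g ≤ m := by
    refine le_trans ?_ hm
    rw [hg]
    exact Int.gcd_le_natAbs_left n hq
  have hker : ∀ d : ZMod n, (q : ZMod n) * d = 0 → g • d = 0 := by
    intro d hd
    have h := Int.gcd_eq_gcd_ab q n
    rw [← hg] at h
    have h2 : ((g : ℤ) : ZMod n) = ((q * q.gcdA n + n * q.gcdB n : ℤ) : ZMod n) := by rw [h]
    push_cast at h2
    rw [nsmul_eq_mul, h2, ZMod.natCast_self, zero_mul, add_zero, mul_right_comm, hd, zero_mul]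
  have hfib : ∀ v : ZMod n,
      (Finset.univ.filter (fun x : ZMod n => (q : ZMod n) * x = v)).card ≤ g := by
    intro v
    rcases (Finset.univ.filter (fun x : ZMod n => (q : ZMod n) * x = v)).eq_empty_or_nonempty
      with h | ⟨x₀, hx₀⟩
    · rw [h]; simp
    · refine le_trans ?_ (IsAddCyclic.card_nsmul_eq_zero_le (α := ZMod n) hg0)
      refine Finset.card_le_card_of_injOn (fun x => x - x₀) ?_ ?_
      · intro x hx
        simp only [Finset.coe_filter, Finset.mem_univ, true_and, Set.mem_ofPred_eq,
          Finset.mem_filter] at hx hx₀ ⊢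
        exact hker _ (by rw [mul_sub, hx, hx₀, sub_self])
      · intro x _ x' _ h
        exact sub_left_injective h
  have hcong : ∀ j j' : ℕ, ∀ x x' : ZMod n, (q : ZMod n) * x = r + j → (q : ZMod n) * x' = r + j' →
      j ≡ j' [MOD g] := by
    intro j j' x x' h h'
    obtain ⟨z, hz⟩ := ZMod.intCast_surjective (x - x')
    have h3 : ((q * z - (j - j') : ℤ) : ZMod n) = 0 := by
      push_cast
      rw [hz, mul_sub, h, h']; ring
    rw [ZMod.intCast_zmod_eq_zero_iff_dvd] at h3
    have h4 : (g : ℤ) ∣ q * z - (j - j') :=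
      dvd_trans (by rw [hg]; exact Int.gcd_dvd_right _ _) h3
    have h5 : (g : ℤ) ∣ q * z := Dvd.dvd.mul_right (by rw [hg]; exact Int.gcd_dvd_left _ _) _
    have h6 : (g : ℤ) ∣ (j : ℤ) - j' := by
      have := dvd_sub h5 h4
      simpa using this
    exact ((Nat.modEq_iff_dvd).2 h6).symm
  by_cases hne : ∃ j₀ : ℕ, ∃ x₀ : ZMod n, (q : ZMod n) * x₀ = r + j₀
  · obtain ⟨j₀, x₀, h₀⟩ := hne
    calc _ ≤ ∑ j ∈ Finset.range W, if j ≡ j₀ [MOD g] then g else 0 := by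
          refine Finset.sum_le_sum fun j _ => ?_
          split_ifs with h
          · exact hfib _
          · rw [Nat.le_zero, Finset.card_eq_zero, Finset.filter_eq_empty_iff]
            intro x _ hx
            exact h (hcong _ _ _ _ hx h₀)
      _ = Nat.count (fun x => x ≡ j₀ [MOD g]) W * g := by
          rw [Nat.count_eq_card_filter_range, ← Finset.sum_filter, Finset.sum_const, smul_eq_mul]
      _ ≤ (W / g + 1) * g := by
          rw [Nat.count_modEq_card _ hg0]
          gcongr
          split_ifs <;> simp
      _ ≤ W + m := by
          have := Nat.div_mul_le_self W g
          rw [add_mul]; omega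
  · push Not at hne
    rw [Finset.sum_eq_zero]
    · simp
    · intro j _
      rw [Finset.card_eq_zero, Finset.filter_eq_empty_iff]
      intro x _
      exact hne j x

lemma fl_add_right {n k : ℕ} [NeZero n] (l : Fin k → ZMod n) (y z : Fin k → ℤ) :
    fl l (y + z) = fl l y + fl l z := by
  simp [fl, add_mul, Finset.sum_add_distrib]

lemma fl_sub_right {n k : ℕ} [NeZero n] (l : Fin k → ZMod n) (y z : Fin k → ℤ) :
    fl l (y - z) = fl l y - fl l z := by
  simp [fl, sub_mul, Finset.sum_sub_distrib]

/-- For a fixed nonzero `y`, the value `f_l(y)` hits a window of `W` consecutive residues with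
probability at most `(W + m) / n`: resample the coordinate of `l` at an index where `y i ≠ 0`. -/
lemma window_count {n k : ℕ} [NeZero n] (y : Fin k → ℤ) (hy : y ≠ 0) (m : ℕ)
    (hm : ∀ i, (y i).natAbs ≤ m) (r : ZMod n) (W : ℕ) :
    n * ∑ j ∈ Finset.range W, ∑ l : Fin k → ZMod n, (if fl l y = r + j then 1 else 0)
      ≤ n ^ k * (W + m) := by
  obtain ⟨i, hi⟩ := Function.ne_iff.1 hy
  have hsh : ∀ (l : Fin k → ZMod n) (x : ZMod n),
      fl (l + Pi.single i x) y = fl l y + (y i : ZMod n) * x := by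
    intro l x
    simp only [fl, Pi.add_apply, mul_add, Finset.sum_add_distrib]
    congr 1
    rw [Finset.sum_eq_single i]
    · simp
    · intro j _ hj; simp [hj]
    · simp
  calc n * ∑ j ∈ Finset.range W, ∑ l : Fin k → ZMod n, (if fl l y = r + j then 1 else 0)
      = ∑ x : ZMod n, ∑ j ∈ Finset.range W, ∑ l : Fin k → ZMod n,
          (if fl (l + Pi.single i x) y = r + (j : ZMod n) then 1 else 0) := by
        rw [Finset.sum_congr rfl (g := fun _ : ZMod n => ∑ j ∈ Finset.range W,
          ∑ l : Fin k → ZMod n, (if fl l y = r + (j : ZMod n) then 1 else 0))]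
        · simp [ZMod.card]
        · intro x _
          refine Finset.sum_congr rfl fun j _ => ?_
          exact Equiv.sum_comp (Equiv.addRight (Pi.single i x : Fin k → ZMod n))
            (fun l => if fl l y = r + (j : ZMod n) then 1 else 0)
    _ = ∑ l : Fin k → ZMod n, ∑ j ∈ Finset.range W,
          (Finset.univ.filter (fun x : ZMod n => (y i : ZMod n) * x = (r - fl l y) + j)).card := by
        simp_rw [Finset.card_filter]
        rw [Finset.sum_comm, Finset.sum_comm (s := (Finset.univ : Finset (Fin k → ZMod n)))]
        refine Finset.sum_congr rfl fun j _ => ?_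
        rw [Finset.sum_comm]
        refine Finset.sum_congr rfl fun l _ => Finset.sum_congr rfl fun x _ => ?_
        rw [hsh]
        refine if_congr ?_ rfl rfl
        constructor <;> intro h
        · rw [sub_add_eq_add_sub, ← h]; ring
        · rw [h]; ring
    _ ≤ ∑ l : Fin k → ZMod n, (W + m) :=
        Finset.sum_le_sum fun l _ => sum_card_mul_eq_le (y i) hi m (hm i) _ W
    _ = n ^ k * (W + m) := by simp [ZMod.card]

/-! ### The cycle distance to zero -/

lemma cycleDist_intCast_le {n : ℕ} [NeZero n] (t : ℤ) :
    cycleDist n (t : ZMod n) 0 ≤ t.natAbs := by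
  rw [cycleDist, ← ZMod.valMinAbs_natAbs_eq_min, zero_sub, ZMod.natAbs_valMinAbs_neg]
  exact ZMod.natAbs_min_of_le_div_two n _ _ (ZMod.coe_valMinAbs _) (ZMod.natAbs_valMinAbs_le _)

lemma exists_eq_of_cycleDist_le {n : ℕ} [NeZero n] (x : ZMod n) (t : ℕ)
    (h : cycleDist n x 0 ≤ t) : ∃ j ∈ Finset.range (2 * t + 1), x = -(t : ZMod n) + j := by
  rw [cycleDist, ← ZMod.valMinAbs_natAbs_eq_min, zero_sub, ZMod.natAbs_valMinAbs_neg] at h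
  refine ⟨(x.valMinAbs + t).toNat, ?_, ?_⟩
  · rw [Finset.mem_range]; omega
  · have h2 : (((x.valMinAbs + t).toNat : ℤ) : ZMod n) = ((x.valMinAbs + t : ℤ) : ZMod n) := by
      congr 1; omega
    rw [Int.cast_natCast, Int.cast_add, ZMod.coe_valMinAbs, Int.cast_natCast] at h2
    rw [h2]; ring

/-! ### No value of `f_l` is too close to zero -/

/-- Union bound over the nonzero points of the box `(-m, m)^k`. -/
lemma near_zero_count (n k m t : ℕ) [NeZero n] :
    n * (Finset.univ.filter (fun l : Fin k → ZMod n => ∃ y : Fin k → ℤ, y ≠ 0 ∧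
      (∀ i, (y i).natAbs < m) ∧ cycleDist n (fl l y) 0 ≤ t)).card
      ≤ (2 * m) ^ k * (n ^ k * (2 * t + 1 + m)) := by
  obtain ⟨Y, hY⟩ : ∃ Y : Finset (Fin k → ℤ),
      Y = (Fintype.piFinset fun _ => Finset.Ioo (-(m : ℤ)) m).filter (fun y => y ≠ 0) := ⟨_, rfl⟩
  have hYc : Y.card ≤ (2 * m) ^ k := by
    rw [hY]
    refine (Finset.card_filter_le _ _).trans ?_
    rw [Fintype.card_piFinset]
    simp only [Int.card_Ioo, Finset.prod_const, Finset.card_univ, Fintype.card_fin]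
    gcongr
    omega
  have hmem : ∀ y, y ∈ Y ↔ (∀ i, (y i).natAbs < m) ∧ y ≠ 0 := by
    intro y
    rw [hY, Finset.mem_filter, Fintype.mem_piFinset]
    refine and_congr_left fun _ => forall_congr' fun i => ?_
    rw [Finset.mem_Ioo]; omega
  calc _ ≤ n * ∑ l : Fin k → ZMod n, ∑ y ∈ Y, ∑ j ∈ Finset.range (2 * t + 1),
          (if fl l y = -(t : ZMod n) + (j : ZMod n) then 1 else 0) := by
        gcongr
        rw [Finset.card_filter]
        refine Finset.sum_le_sum fun l _ => ?_
        split_ifs with h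
        · obtain ⟨y, hy0, hym, hyd⟩ := h
          obtain ⟨j, hj, hjx⟩ := exists_eq_of_cycleDist_le _ _ hyd
          calc 1 = (if fl l y = -(t : ZMod n) + (j : ZMod n) then 1 else 0) := by rw [if_pos hjx]
            _ ≤ ∑ j ∈ Finset.range (2 * t + 1),
                (if fl l y = -(t : ZMod n) + (j : ZMod n) then 1 else 0) :=
              Finset.single_le_sum
                (f := fun j : ℕ => if fl l y = -(t : ZMod n) + (j : ZMod n) then 1 else 0)
                (fun _ _ => Nat.zero_le _) hj
            _ ≤ _ := Finset.single_le_sum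
                (f := fun y => ∑ j ∈ Finset.range (2 * t + 1),
                  (if fl l y = -(t : ZMod n) + (j : ZMod n) then 1 else 0))
                (fun _ _ => Nat.zero_le _) ((hmem y).2 ⟨hym, hy0⟩)
        · exact Nat.zero_le _
    _ = ∑ y ∈ Y, n * ∑ j ∈ Finset.range (2 * t + 1), ∑ l : Fin k → ZMod n,
          (if fl l y = -(t : ZMod n) + (j : ZMod n) then 1 else 0) := by
        rw [Finset.sum_comm, Finset.mul_sum]
        refine Finset.sum_congr rfl fun y _ => ?_
        rw [Finset.sum_comm]
    _ ≤ ∑ y ∈ Y, n ^ k * (2 * t + 1 + m) :=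
        Finset.sum_le_sum fun y hy =>
          window_count y ((hmem y).1 hy).2 m (fun i => (((hmem y).1 hy).1 i).le) _ _
    _ = Y.card * (n ^ k * (2 * t + 1 + m)) := by rw [Finset.sum_const, smul_eq_mul]
    _ ≤ _ := by gcongr

/-! ### The thickened image of a box covers more than half of the cycle -/

/-- The box `[0, M)^k` of integer points. -/
def posBox (k M : ℕ) : Finset (Fin k → ℤ) := Fintype.piFinset fun _ => Finset.Ico 0 (M : ℤ)

lemma card_posBox (k M : ℕ) : (posBox k M).card = M ^ k := by
  simp [posBox, Fintype.card_piFinset]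

/-- The union of the windows `f_l(a) + {0, …, w - 1}` over the points `a` of `[0, M)^k`. -/
def covered {n k : ℕ} [NeZero n] (M w : ℕ) (l : Fin k → ZMod n) : Finset (ZMod n) :=
  (posBox k M ×ˢ Finset.range w).image (fun p => fl l p.1 + (p.2 : ZMod n))

/-- Cauchy–Schwarz: a map with few collisions has a large image. -/
lemma card_sq_le_card_image_mul {ι β : Type*} [DecidableEq β] (P : Finset ι) (φ : ι → β) :
    P.card ^ 2 ≤ (P.image φ).card * ∑ p ∈ P, ∑ p' ∈ P, (if φ p = φ p' then 1 else 0) := by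
  have h1 : ∑ p ∈ P, ∑ p' ∈ P, (if φ p = φ p' then 1 else 0)
      = ∑ b ∈ P.image φ, (P.filter (fun a => φ a = b)).card ^ 2 := by
    have := Finset.sum_comp (s := P) (fun b => (P.filter (fun a => φ a = b)).card) φ
    simp only [smul_eq_mul, ← sq] at this
    rw [← this]
    refine Finset.sum_congr rfl fun p _ => ?_
    rw [Finset.card_filter]
    exact Finset.sum_congr rfl fun p' _ => if_congr eq_comm rfl rfl
  rw [h1]
  conv_lhs => rw [Finset.card_eq_sum_card_image φ P]
  exact_mod_cast sq_sum_le_card_mul_sum_sq (α := ℕ)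

/-- First moment of the number of collisions: the diagonal `a = a'` contributes `M ^ k * w`
(this is where `w ≤ n` matters), and each pair `a ≠ a'` at most `w * (w + M) / n`. -/
lemma sum_collisions_le {n k : ℕ} [NeZero n] (M w : ℕ) (hw : w ≤ n) :
    n * ∑ l : Fin k → ZMod n, ∑ p ∈ posBox k M ×ˢ Finset.range w,
        ∑ p' ∈ posBox k M ×ˢ Finset.range w,
        (if fl l p.1 + (p.2 : ZMod n) = fl l p'.1 + (p'.2 : ZMod n) then 1 else 0)
      ≤ n ^ k * (n * (M ^ k * w) + (M ^ k) ^ 2 * w * (w + M)) := by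
  have hpair : ∀ a ∈ posBox k M, ∀ a' ∈ posBox k M, ∀ j ∈ Finset.range w,
      n * ∑ j' ∈ Finset.range w, ∑ l : Fin k → ZMod n,
        (if fl l a + (j : ZMod n) = fl l a' + (j' : ZMod n) then 1 else 0)
      ≤ n ^ k * ((if a = a' then n else 0) + (w + M)) := by
    intro a ha a' ha' j hj
    split_ifs with h
    · subst h
      have : ∑ j' ∈ Finset.range w, ∑ l : Fin k → ZMod n,
          (if fl l a + (j : ZMod n) = fl l a + (j' : ZMod n) then 1 else 0) = n ^ k := by
        rw [Finset.sum_eq_single j]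
        · simp [ZMod.card]
        · intro j' hj' hne
          refine Finset.sum_eq_zero fun l _ => if_neg fun heq => hne ?_
          rw [Finset.mem_range] at hj hj'
          have h2 := add_left_cancel heq
          rw [ZMod.natCast_eq_natCast_iff] at h2
          exact (h2.eq_of_lt_of_lt (by omega) (by omega)).symm
        · exact fun h => absurd hj h
      rw [this, mul_comm n]
      gcongr
      omega
    · rw [zero_add]
      refine le_trans (le_of_eq ?_) (window_count (a - a') (sub_ne_zero.2 h) M ?_ (-(j : ZMod n)) w)
      · congr 1
        refine Finset.sum_congr rfl fun j' _ => Finset.sum_congr rfl fun l _ => ?_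
        rw [fl_sub_right]
        refine if_congr ?_ rfl rfl
        constructor <;> intro h
        · rw [sub_eq_iff_eq_add, neg_add_eq_sub, sub_add_eq_add_sub, eq_sub_iff_add_eq, h, add_comm]
        · rw [sub_eq_iff_eq_add] at h
          rw [h]; ring
      · intro i
        have h1 := Finset.mem_Ico.1 (Fintype.mem_piFinset.1 ha i)
        have h2 := Finset.mem_Ico.1 (Fintype.mem_piFinset.1 ha' i)
        rw [Pi.sub_apply]; omega
  calc _ = ∑ a ∈ posBox k M, ∑ j ∈ Finset.range w, ∑ a' ∈ posBox k M,
        n * ∑ j' ∈ Finset.range w, ∑ l : Fin k → ZMod n,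
        (if fl l a + (j : ZMod n) = fl l a' + (j' : ZMod n) then 1 else 0) := by
        rw [Finset.sum_comm, Finset.sum_product, Finset.mul_sum]
        refine Finset.sum_congr rfl fun a _ => ?_
        rw [Finset.mul_sum]
        refine Finset.sum_congr rfl fun j _ => ?_
        rw [Finset.sum_comm, Finset.sum_product, Finset.mul_sum]
    _ ≤ ∑ a ∈ posBox k M, ∑ j ∈ Finset.range w, ∑ a' ∈ posBox k M,
        n ^ k * ((if a = a' then n else 0) + (w + M)) :=
        Finset.sum_le_sum fun a ha => Finset.sum_le_sum fun j hj => Finset.sum_le_sum fun a' ha' =>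
          hpair a ha a' ha' j hj
    _ = ∑ a ∈ posBox k M, ∑ j ∈ Finset.range w, n ^ k * (n + M ^ k * (w + M)) := by
        refine Finset.sum_congr rfl fun a ha => Finset.sum_congr rfl fun j _ => ?_
        rw [← Finset.mul_sum, Finset.sum_add_distrib, Finset.sum_ite_eq, if_pos ha,
          Finset.sum_const, card_posBox, smul_eq_mul]
    _ = _ := by
        simp only [Finset.sum_const, card_posBox, Finset.card_range, smul_eq_mul]
        ring

/-- Markov's inequality for the nonnegative quantity `n * collisions - |P|²`, where
`P = [0, M)^k × [0, w)`; it is at least `|P|²` whenever at most half of the cycle is covered. -/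
lemma not_covered_count (n k M w : ℕ) [NeZero n] (hw : w ≤ n) :
    (Finset.univ.filter (fun l : Fin k → ZMod n => 2 * (covered M w l).card ≤ n)).card
      * (M ^ k * w) ^ 2 ≤ n ^ k * (n * (M ^ k * w) + (M ^ k) ^ 2 * w * M) := by
  have hl : ∀ l : Fin k → ZMod n,
      (if 2 * (covered M w l).card ≤ n then 1 else 0) * (M ^ k * w) ^ 2 + (M ^ k * w) ^ 2
      ≤ n * ∑ p ∈ posBox k M ×ˢ Finset.range w, ∑ p' ∈ posBox k M ×ˢ Finset.range w,
        (if fl l p.1 + (p.2 : ZMod n) = fl l p'.1 + (p'.2 : ZMod n) then 1 else 0) := by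
    intro l
    have h := card_sq_le_card_image_mul (posBox k M ×ˢ Finset.range w)
      (fun p => fl l p.1 + (p.2 : ZMod n))
    change _ ≤ (covered M w l).card * _ at h
    rw [Finset.card_product, card_posBox, Finset.card_range] at h
    split_ifs with hb
    · calc _ = 2 * (M ^ k * w) ^ 2 := by ring
        _ ≤ 2 * _ := Nat.mul_le_mul_left 2 h
        _ = _ := (mul_assoc _ _ _).symm
        _ ≤ _ := Nat.mul_le_mul_right _ hb
    · rw [zero_mul, zero_add]
      refine h.trans (Nat.mul_le_mul_right _ ?_)
      exact (Finset.card_le_univ _).trans (ZMod.card n).le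
  have hs := Finset.sum_le_sum fun l (_ : l ∈ (Finset.univ : Finset (Fin k → ZMod n))) => hl l
  rw [Finset.sum_add_distrib, ← Finset.sum_mul, ← Finset.card_filter, ← Finset.mul_sum] at hs
  have hs2 := hs.trans (sum_collisions_le (k := k) M w hw)
  simp only [Finset.sum_const, Finset.card_univ, Fintype.card_pi, ZMod.card, Finset.prod_const,
    Fintype.card_fin, smul_eq_mul] at hs2
  have h3 : n ^ k * (n * (M ^ k * w) + (M ^ k) ^ 2 * w * (w + M))
    = n ^ k * (n * (M ^ k * w) + (M ^ k) ^ 2 * w * M) + n ^ k * (M ^ k * w) ^ 2 := by ring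
  rw [h3] at hs2
  exact Nat.le_of_add_le_add_right hs2

/-- A set covering more than half of the cycle meets its translate by `f_l(M b)`; subtracting the
two representations gives a point `y = M b + a' - a` of the open box `0 < b i * y i < 2 M`. -/
lemma exists_point_of_covered {n k : ℕ} [NeZero n] (hk : 1 ≤ k) (M w : ℕ)
    (l : Fin k → ZMod n) (hcov : n < 2 * (covered M w l).card) (b : Fin k → ℤ) (hb : IsSign b) :
    ∃ y : Fin k → ℤ, inYmb b (2 * M) y ∧ y ≠ 0 ∧ cycleDist n (fl l y) 0 < w := by
  obtain ⟨u, hu⟩ : ∃ u : Fin k → ℤ, u = fun i => M * b i := ⟨_, rfl⟩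
  have hint : ∃ x ∈ covered M w l, x ∈ (covered M w l).image (fun z => z + fl l u) := by
    by_contra! hno
    have hd : Disjoint (covered M w l) ((covered M w l).image (fun z => z + fl l u)) :=
      Finset.disjoint_left.2 hno
    have h1 := Finset.card_union_of_disjoint hd
    rw [Finset.card_image_of_injective _ (add_left_injective _)] at h1
    have h2 := (Finset.card_le_univ (covered M w l ∪
      (covered M w l).image (fun z => z + fl l u))).trans (ZMod.card n).le
    omega
  obtain ⟨x, hx, hx'⟩ := hint
  obtain ⟨z, hz, hzx⟩ := Finset.mem_image.1 hx'
  obtain ⟨⟨a, j⟩, hp, rfl⟩ := Finset.mem_image.1 hx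
  obtain ⟨⟨a', j'⟩, hp', rfl⟩ := Finset.mem_image.1 hz
  rw [Finset.mem_product, Finset.mem_range] at hp hp'
  simp only at hp hp' hzx
  have hbox : ∀ i, 0 < b i * (u + a' - a) i ∧ b i * (u + a' - a) i < (2 * M : ℕ) := by
    intro i
    have h1 := Finset.mem_Ico.1 (Fintype.mem_piFinset.1 hp.1 i)
    have h2 := Finset.mem_Ico.1 (Fintype.mem_piFinset.1 hp'.1 i)
    simp only [hu, Pi.add_apply, Pi.sub_apply]
    rcases hb i with h | h <;> rw [h] <;> push_cast <;> constructor <;> linarith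
  refine ⟨u + a' - a, fun i => ⟨(hbox i).1.le, (hbox i).2⟩, ?_, ?_⟩
  · intro h0
    have := (hbox ⟨0, hk⟩).1
    rw [h0] at this
    simp at this
  · have : fl l (u + a' - a) = (((j : ℤ) - j' : ℤ) : ZMod n) := by
      rw [fl_sub_right, fl_add_right]
      push_cast
      rw [sub_eq_iff_eq_add, sub_add_eq_add_sub, add_comm (j : ZMod n), ← hzx]
      ring
    rw [this]
    refine (cycleDist_intCast_le _).trans_lt ?_
    omega

/-! ### Asymptotics and conclusion -/

/-- `m → ∞`, while `m ^ (k + 1)` is of order `√n`, hence `o(n)`. -/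
lemma mOf_asymptotics (k : ℕ) (c : ℝ) (hc : 0 < c) (A ε : ℝ) (hε : 0 < ε) :
    ∃ N : ℕ, ∀ n : ℕ, N ≤ n → A ≤ (mOf k c n : ℝ) ∧ (mOf k c n : ℝ) ^ (k + 1) ≤ ε * n := by
  have he : (0 : ℝ) < 1 / (2 * (k : ℝ) + 2) := by positivity
  have ht : Filter.Tendsto (fun n : ℕ => (n : ℝ) ^ ((1 : ℝ) / (2 * (k : ℝ) + 2)))
      Filter.atTop Filter.atTop := (tendsto_rpow_atTop he).comp tendsto_natCast_atTop_atTop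
  obtain ⟨N, hN⟩ := Filter.eventually_atTop.1 ((ht.eventually_ge_atTop (A / c)).and
    ((ht.eventually_ge_atTop (1 / c)).and ((ht.eventually_ge_atTop 1).and
      (ht.eventually_ge_atTop ((2 * c) ^ (k + 1) / ε)))))
  refine ⟨N, fun n hn => ?_⟩
  obtain ⟨h1, h2, h3, h4⟩ := hN n hn
  have hxn : ((n : ℝ) ^ ((1 : ℝ) / (2 * (k : ℝ) + 2))) ^ (2 * k + 2) = n := by
    rw [← Real.rpow_natCast, ← Real.rpow_mul (Nat.cast_nonneg n)]
    push_cast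
    rw [one_div_mul_cancel (by positivity), Real.rpow_one]
  have hm1 : c * (n : ℝ) ^ ((1 : ℝ) / (2 * (k : ℝ) + 2)) ≤ mOf k c n := Nat.le_ceil _
  have hm2 : (mOf k c n : ℝ) < c * (n : ℝ) ^ ((1 : ℝ) / (2 * (k : ℝ) + 2)) + 1 :=
    Nat.ceil_lt_add_one (by positivity)
  generalize (n : ℝ) ^ ((1 : ℝ) / (2 * (k : ℝ) + 2)) = x at *
  rw [div_le_iff₀ hc] at h1 h2
  rw [div_le_iff₀ hε] at h4
  refine ⟨by linarith, ?_⟩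
  calc (mOf k c n : ℝ) ^ (k + 1) ≤ (2 * c * x) ^ (k + 1) := by
        gcongr; linarith
    _ = (2 * c) ^ (k + 1) * x ^ (k + 1) := mul_pow _ _ _
    _ ≤ (x * ε) * x ^ (k + 1) := by gcongr
    _ ≤ (x ^ (k + 1) * ε) * x ^ (k + 1) := by
        gcongr
        exact le_self_pow₀ h3 (Nat.succ_ne_zero k)
    _ = ε * x ^ (2 * k + 2) := by ring
    _ = ε * n := by rw [hxn]

lemma lProb_ge_of_card_not_le {n k : ℕ} [NeZero n] (E : (Fin k → ZMod n) → Prop) (δ : ℝ)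
    (h : ((Finset.univ.filter (fun l => ¬ E l)).card : ℝ) ≤ δ * (n : ℝ) ^ k) :
    1 - δ ≤ lProb n k E := by
  have hn : (0 : ℝ) < (n : ℝ) ^ k := by
    have : (0 : ℝ) < n := by exact_mod_cast Nat.pos_of_ne_zero (NeZero.ne n)
    positivity
  have hcard : Fintype.card (Fin k → ZMod n) = n ^ k := by simp [ZMod.card]
  have hsum := Finset.card_filter_add_card_filter_not (s := (Finset.univ : Finset (Fin k → ZMod n))) E
  rw [Finset.card_univ, hcard] at hsum
  have hsum' : ((Finset.univ.filter E).card : ℝ)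
      + ((Finset.univ.filter (fun l => ¬ E l)).card : ℝ) = (n : ℝ) ^ k := by exact_mod_cast hsum
  rw [lProb, hcard, Nat.cast_pow, le_div_iff₀ hn]
  linarith

/-- for every `0 < δ₂ < 1` there are `α₁ > 0`, `α₂ < ∞` and `N` such that
for all `n ≥ N`, with probability at least `1 - δ₂` over `l`: for every sign pattern `b`
there is a nonzero `y ∈ Y_m^b` with `α₁ s < d(f_l(y), 0) ≤ α₂ s`. -/
theorem point_near_zero_exists (k : ℕ) (hk : 1 ≤ k) (c : ℝ) (hc : 0 < c)
    (δ₂ : ℝ) (h0 : 0 < δ₂) (h1 : δ₂ < 1) :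
    ∃ α₁ α₂ : ℝ, 0 < α₁ ∧ ∃ N : ℕ, ∀ (n : ℕ) [NeZero n], N ≤ n →
      1 - δ₂ ≤ lProb n k (fun l =>
        ∀ b : Fin k → ℤ, IsSign b →
          ∃ y : Fin k → ℤ, inYmb b (mOf k c n) y ∧ y ≠ 0 ∧
            α₁ * sOf k c n < (cycleDist n (fl l y) 0 : ℝ) ∧
            (cycleDist n (fl l y) 0 : ℝ) ≤ α₂ * sOf k c n) := by
  -- `ε = δ₂ / (8 * 2 ^ k)` serves both as `α₁` and as the bound on `m ^ (k + 1) / n`, so that the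
  -- union bound costs `δ₂ / 2`; with `α₂ = 8 * 3 ^ k / δ₂` the covering failure costs `δ₂ / 4`.
  -- The factor `3 ^ k` comes from `m ≤ 3 * ⌊m / 2⌋`.
  have hε : 0 < δ₂ / (8 * 2 ^ k) := by positivity
  have hε1 : δ₂ / (8 * 2 ^ k) ≤ 1 := by
    rw [div_le_one (by positivity)]
    have : (1 : ℝ) ≤ 2 ^ k := one_le_pow₀ (by norm_num)
    linarith
  have hε2 : 2 ^ k * (δ₂ / (8 * 2 ^ k)) = δ₂ / 8 := by field_simp
  obtain ⟨N, hN⟩ := mOf_asymptotics k c hc (max 2 (8 * 3 ^ k / δ₂)) (δ₂ / (8 * 2 ^ k)) hε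
  refine ⟨δ₂ / (8 * 2 ^ k), 8 * 3 ^ k / δ₂, hε, N, fun n _ hn => ?_⟩
  obtain ⟨hmA, hmn⟩ := hN n hn
  have hm2 : (2 : ℝ) ≤ mOf k c n := (le_max_left _ _).trans hmA
  have hmα : 8 * 3 ^ k / δ₂ ≤ mOf k c n := (le_max_right _ _).trans hmA
  have hn0 : (0 : ℝ) < n := by exact_mod_cast Nat.pos_of_ne_zero (NeZero.ne n)
  have hα2 : 8 * 3 ^ k / δ₂ * δ₂ = 8 * 3 ^ k := by field_simp
  have hs : sOf k c n * (mOf k c n : ℝ) ^ k = n := by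
    rw [sOf]; field_simp
  have hs0 : 0 < sOf k c n := by rw [sOf]; positivity
  generalize sOf k c n = s at *
  generalize mOf k c n = m at *
  generalize δ₂ / (8 * 2 ^ k) = ε at *
  have hα0 : 0 < 8 * 3 ^ k / δ₂ := by positivity
  generalize 8 * 3 ^ k / δ₂ = α at *
  have hm2' : 2 ≤ m := by exact_mod_cast hm2
  have hnk : (0 : ℝ) < (n : ℝ) ^ k := by positivity
  have hmk : (m : ℝ) ≤ (m : ℝ) ^ k := le_self_pow₀ (by linarith) (by omega)
  obtain ⟨w, hw⟩ : ∃ w, w = ⌈α * s⌉₊ := ⟨_, rfl⟩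
  obtain ⟨t, ht⟩ : ∃ t, t = ⌊ε * s⌋₊ := ⟨_, rfl⟩
  obtain ⟨M, hM⟩ : ∃ M, M = m / 2 := ⟨_, rfl⟩
  have hwn : w ≤ n := by
    rw [hw, Nat.ceil_le, ← hs, mul_comm]
    gcongr
    linarith
  have hwα : α * s ≤ w := by rw [hw]; exact Nat.le_ceil _
  have htε : (t : ℝ) ≤ ε * s := by rw [ht]; exact Nat.floor_le (by positivity)
  have hM3 : (m : ℝ) ≤ 3 * M := by
    have : m ≤ 3 * M := by omega
    exact_mod_cast this
  have hMm : (M : ℝ) ≤ m := by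
    have : M ≤ m := by omega
    exact_mod_cast this
  have hM0 : (0 : ℝ) < M := by linarith
  have hw0 : (0 : ℝ) < w := lt_of_lt_of_le (by positivity) hwα
  -- the event that some nonzero point of the box comes too close to zero
  have hE1 : ((Finset.univ.filter (fun l : Fin k → ZMod n => ∃ y : Fin k → ℤ, y ≠ 0 ∧
      (∀ i, (y i).natAbs < m) ∧ cycleDist n (fl l y) 0 ≤ t)).card : ℝ)
      ≤ δ₂ / 2 * (n : ℝ) ^ k := by
    have h := near_zero_count n k m t
    have h' := (Nat.cast_le (α := ℝ)).2 h
    rw [Nat.cast_mul] at h'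
    refine le_of_mul_le_mul_left (h'.trans ?_) hn0
    push_cast
    have h2 : (2 * (m : ℝ)) ^ k * (2 * t + 1 + m) ≤ δ₂ / 2 * n := by
      calc (2 * (m : ℝ)) ^ k * (2 * t + 1 + m)
          ≤ (2 * (m : ℝ)) ^ k * (2 * (ε * s) + m + m) := by gcongr; linarith
        _ = 2 * (2 ^ k * ε) * (s * (m : ℝ) ^ k) + 2 * 2 ^ k * (m : ℝ) ^ (k + 1) := by
            rw [mul_pow]; ring
        _ ≤ 2 * (2 ^ k * ε) * (s * (m : ℝ) ^ k) + 2 * 2 ^ k * (ε * n) := by gcongr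
        _ = 4 * (2 ^ k * ε) * n := by rw [hs]; ring
        _ = δ₂ / 2 * n := by rw [hε2]; ring
    calc (2 * (m : ℝ)) ^ k * ((n : ℝ) ^ k * (2 * t + 1 + m))
        = (n : ℝ) ^ k * ((2 * (m : ℝ)) ^ k * (2 * t + 1 + m)) := by ring
      _ ≤ (n : ℝ) ^ k * (δ₂ / 2 * n) := by gcongr
      _ = _ := by ring
  -- the event that at most half of the cycle is covered
  have hE2 : ((Finset.univ.filter
      (fun l : Fin k → ZMod n => 2 * (covered M w l).card ≤ n)).card : ℝ)
      ≤ δ₂ / 4 * (n : ℝ) ^ k := by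
    have h' := (Nat.cast_le (α := ℝ)).2 (not_covered_count n k M w hwn)
    rw [Nat.cast_mul] at h'
    push_cast at h'
    have hP : (0 : ℝ) < (M : ℝ) ^ k * w := by positivity
    refine le_of_mul_le_mul_right (h'.trans ?_) (pow_pos hP 2)
    have h1 : (n : ℝ) ≤ δ₂ / 8 * ((M : ℝ) ^ k * w) := by
      have h3 : (m : ℝ) ^ k ≤ 3 ^ k * (M : ℝ) ^ k := by rw [← mul_pow]; gcongr
      have h4 : 8 * 3 ^ k * (n : ℝ) ≤ 3 ^ k * (δ₂ * ((M : ℝ) ^ k * w)) := by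
        calc 8 * 3 ^ k * (n : ℝ) = δ₂ * ((m : ℝ) ^ k * (α * s)) := by rw [← hα2, ← hs]; ring
          _ ≤ δ₂ * ((3 ^ k * (M : ℝ) ^ k) * w) := by gcongr
          _ = _ := by ring
      have h5 : (3 : ℝ) ^ k * (8 * n) ≤ 3 ^ k * (δ₂ * ((M : ℝ) ^ k * w)) := by linarith
      have := le_of_mul_le_mul_left h5 (by positivity)
      linarith
    have h2 : (M : ℝ) ≤ δ₂ / 8 * w := by
      have hms : (m : ℝ) ≤ s := by
        refine le_of_mul_le_mul_right ?_ (show (0 : ℝ) < (m : ℝ) ^ k by positivity)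
        rw [hs, ← pow_succ']
        exact hmn.trans (mul_le_of_le_one_left hn0.le hε1)
      have h3k : (1 : ℝ) ≤ 3 ^ k := one_le_pow₀ (by norm_num)
      calc (M : ℝ) ≤ 1 * s := by linarith
        _ ≤ 3 ^ k * s := by gcongr
        _ = δ₂ / 8 * (α * s) := by linear_combination (-s / 8) * hα2
        _ ≤ δ₂ / 8 * w := by gcongr
    calc (n : ℝ) ^ k * (n * ((M : ℝ) ^ k * w) + ((M : ℝ) ^ k) ^ 2 * w * M)
        ≤ (n : ℝ) ^ k * ((δ₂ / 8 * ((M : ℝ) ^ k * w)) * ((M : ℝ) ^ k * w)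
            + ((M : ℝ) ^ k) ^ 2 * w * (δ₂ / 8 * w)) := by gcongr
      _ = _ := by ring
  refine lProb_ge_of_card_not_le _ _ ?_
  refine le_trans ?_ (show δ₂ / 2 * (n : ℝ) ^ k + δ₂ / 4 * (n : ℝ) ^ k ≤ _ by nlinarith)
  refine le_trans ?_ (add_le_add hE1 hE2)
  rw [← Nat.cast_add, Nat.cast_le]
  refine le_trans (Finset.card_le_card ?_) (Finset.card_union_le _ _)
  intro l hl
  rw [Finset.mem_union, Finset.mem_filter, Finset.mem_filter]
  by_contra! hgood
  obtain ⟨hg1, hg2⟩ := hgood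
  refine (Finset.mem_filter.1 hl).2 fun b hb => ?_
  obtain ⟨y, hyb, hy0, hyd⟩ := exists_point_of_covered hk M w l (hg2 (Finset.mem_univ l)) b hb
  have hyb' : inYmb b m y := by
    intro i
    refine ⟨(hyb i).1, (hyb i).2.trans_le ?_⟩
    exact_mod_cast (show 2 * M ≤ m by omega)
  refine ⟨y, hyb', hy0, ?_, ?_⟩
  · have := hg1 (Finset.mem_univ l) y hy0 (fun i => ?_)
    · rw [ht] at this
      exact Nat.lt_of_floor_lt this
    · have h3 := hyb' i
      rcases hb i with h | h <;> rw [h] at h3 <;> omega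
  · rw [hw] at hyd
    exact (Nat.lt_ceil.1 hyd).le
end
end

section
/- For every δ₃ with 0 < δ₃ < 1 there exist α₃ > 0 and N ∈ ℕ such that for every n ≥ N, with probability at least 1 − δ₃ over the random l: for every sign pattern b ∈ {−1,1}^k there exist y', y'' ∈ Y_m^b and integers t', t'' with 0 < t' < α₃ · s and 0 < t'' < α₃ · s such that f_l(y') = t' mod n and f_l(y'') = −t'' mod n; that is, the mapped positions of y' and y'' fall on the two sides of 0 at distance of order the standard distance s. -/
/-!
Let `A_l` be the set of all `f_l(y) + t` with `y ∈ [0, M)^k` and `0 ≤ t < T`, where `M ≈ m / 2` and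
`T ≈ α₃ s / 2`. If `A_l` has more than `n / 2` elements then `A_l - A_l` is all of `ZMod n`
(`exists_near_of_half_covered`). Hence for every target `z` and every sign pattern `b` the box
`Y_m^b`, which contains a translate of `[0, M)^k - [0, M)^k`, has a point whose image is at distance
less than `T` from `z`; the targets `T` and `-T` give the two required points. A single event thus
serves all sign patterns and both sides of zero.

That `A_l` is this large with high probability follows from a second moment bound on the number of
collisions `f_l(y₁) + t₁ = f_l(y₂) + t₂`. By Cauchy-Schwarz there are always at least
`(M^k T)^2 / n` collisions, and at least twice as many when `|A_l| ≤ n / 2`. On average there are at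
most `M^k T + (M^k)^2 T (T + M) / n` (`sum_collisions_le`), since for `y ≠ 0` the value `f_l(y)`
falls in a window of length `T` with probability at most `(T + M) / n`, for composite `n` as well
(`sum_card_fl_window_le`). Markov's inequality applied to the excess bounds the failure probability
by `n / (M^k T) + M / T` (`card_bad_le`). The first term is at most `2^(k+2) / α₃`, and the second
tends to zero because `m^(k+1)` is of order `√n`.
-/

open scoped BigOperators

noncomputable section

attribute [local instance 10] Classical.propDecidable

/-! ### Probability that a linear form hits a window -/

open Finset in
/-- Fibres of multiplication by `a` on `ZMod n` have at most `gcd(a, n)` elements. -/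
lemma card_mul_fiber_le {n : ℕ} [NeZero n] (a : ℤ) (w : ZMod n) :
    #{x : ZMod n | (a : ZMod n) * x = w} ≤ Int.gcd a n := by
  rcases (univ.filter fun x : ZMod n => (a : ZMod n) * x = w).eq_empty_or_nonempty with
    h | ⟨x₀, h⟩
  · rw [h]; simp
  have hd : 0 < Int.gcd a n := Int.gcd_pos_of_ne_zero_right _ (by exact_mod_cast NeZero.ne n)
  refine le_trans ?_ (IsAddCyclic.card_nsmul_eq_zero_le (α := ZMod n) hd)
  refine Finset.card_le_card_of_injOn (fun x => x - x₀) ?_ ?_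
  · intro x hx
    simp only [Finset.coe_filter, Finset.mem_univ, true_and, Set.mem_ofPred_eq,
      Finset.mem_filter] at hx h ⊢
    have h3 : (a : ZMod n) * (x - x₀) = 0 := by rw [mul_sub, hx, h, sub_self]
    have h4 : ((Int.gcd a n : ℤ) : ZMod n) = a * (Int.gcdA a n : ℤ) := by
      rw [Int.gcd_eq_gcd_ab]; push_cast; simp
    rw [nsmul_eq_mul, ← Int.cast_natCast, h4, mul_right_comm, h3, zero_mul]
  · intro x _ y _ hxy
    simpa using hxy

open Finset in
/-- As `x` runs over `ZMod n`, the multiple `a x` lands in a window of `T` consecutive residues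
at most `T + |a|` times: only residues of one class modulo `d = gcd(a, n)` are attained,
each `d` times. -/
lemma sum_card_mul_fiber_le {n : ℕ} [NeZero n] (a : ℤ) (ha : a ≠ 0) (z : ZMod n) (T : ℕ) :
    ∑ t ∈ range T, #{x : ZMod n | (a : ZMod n) * x = z + (t : ZMod n)} ≤ T + a.natAbs := by
  set d := Int.gcd a n with hd
  have hdpos : 0 < d := Int.gcd_pos_of_ne_zero_left _ ha
  have hda : d ≤ a.natAbs := Nat.le_of_dvd (Int.natAbs_pos.2 ha) (by
    rw [hd]; exact Nat.gcd_dvd_left _ _)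
  have hdn : d ∣ n := by rw [hd]; exact Nat.gcd_dvd_right _ _
  set S := (range T).filter fun t : ℕ => ∃ x : ZMod n, (a : ZMod n) * x = z + (t : ZMod n) with hS
  have h1 : ∑ t ∈ range T, #{x : ZMod n | (a : ZMod n) * x = z + (t : ZMod n)} ≤ ∑ t ∈ S, d := by
    rw [hS, Finset.sum_filter]
    refine Finset.sum_le_sum fun t _ => ?_
    split_ifs with h
    · exact card_mul_fiber_le a _
    · push Not at h
      simp [h]
  have h2 : #S ≤ T / d + 1 := by
    rcases S.eq_empty_or_nonempty with h | ⟨t₀, h⟩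
    · rw [h]; simp
    have hres : ∀ t ∈ S, ZMod.cast z + (t : ZMod d) = 0 := by
      intro t ht
      obtain ⟨x, hx⟩ := (Finset.mem_filter.1 ht).2
      have := congrArg (ZMod.castHom hdn (ZMod d)) hx
      rw [map_mul, map_add, map_intCast, map_natCast] at this
      have ha0 : (a : ZMod d) = 0 := by
        rw [ZMod.intCast_zmod_eq_zero_iff_dvd]
        rw [hd]; exact Int.gcd_dvd_left _ _
      rw [ha0, zero_mul] at this
      simpa using this.symm
    have hsub : S ⊆ (range T).filter fun t : ℕ => t ≡ t₀ [MOD d] := by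
      intro t ht
      refine Finset.mem_filter.2 ⟨(Finset.mem_filter.1 ht).1, ?_⟩
      rw [← ZMod.natCast_eq_natCast_iff]
      exact add_left_cancel ((hres t ht).trans (hres t₀ h).symm)
    refine (Finset.card_le_card hsub).trans ?_
    rw [← Nat.count_eq_card_filter_range, Nat.count_modEq_card _ hdpos]
    split_ifs <;> omega
  calc _ ≤ _ := h1
    _ = #S * d := by simp
    _ ≤ (T / d + 1) * d := Nat.mul_le_mul_right _ h2
    _ = T / d * d + d := by ring
    _ ≤ T + a.natAbs := Nat.add_le_add (Nat.div_mul_le_self _ _) hda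

lemma fl_add_single {n k : ℕ} [NeZero n] (l : Fin k → ZMod n) (y : Fin k → ℤ) (i : Fin k)
    (x : ZMod n) : fl (l + Pi.single i x) y = fl l y + (y i : ZMod n) * x := by
  simp [fl, mul_add, Finset.sum_add_distrib, Pi.single_apply]

lemma fl_add {n k : ℕ} [NeZero n] (l : Fin k → ZMod n) (y y' : Fin k → ℤ) :
    fl l (y + y') = fl l y + fl l y' := by
  simp [fl, add_mul, Finset.sum_add_distrib]

lemma fl_sub {n k : ℕ} [NeZero n] (l : Fin k → ZMod n) (y y' : Fin k → ℤ) :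
    fl l (y - y') = fl l y - fl l y' := by
  simp [fl, sub_mul, Finset.sum_sub_distrib]

open Finset in
/-- For `y ≠ 0` with `|yᵢ| ≤ M`, the value `f_l(y)` lies in a given window of `T` residues for at
most a fraction `(T + M) / n` of all `l`. The proof averages over shifts of one coordinate `lᵢ`
with `yᵢ ≠ 0`. -/
lemma sum_card_fl_window_le {n k : ℕ} [NeZero n] (y : Fin k → ℤ) (hy : y ≠ 0) (M : ℕ)
    (hM : ∀ i, (y i).natAbs ≤ M) (z : ZMod n) (T : ℕ) :
    n * ∑ l : Fin k → ZMod n, #((range T).filter fun t : ℕ => fl l y = z + (t : ZMod n))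
      ≤ n ^ k * (T + M) := by
  obtain ⟨i, hi⟩ := Function.ne_iff.1 hy
  have hshift : ∀ x : ZMod n,
      ∑ l : Fin k → ZMod n, #((range T).filter fun t : ℕ => fl (l + Pi.single i x) y = z + (t : ZMod n)) =
      ∑ l : Fin k → ZMod n, #((range T).filter fun t : ℕ => fl l y = z + (t : ZMod n)) := fun x =>
    Equiv.sum_comp (Equiv.addRight (Pi.single i x : Fin k → ZMod n))
      (fun l => #((range T).filter fun t : ℕ => fl l y = z + (t : ZMod n)))
  calc n * ∑ l : Fin k → ZMod n, #((range T).filter fun t : ℕ => fl l y = z + (t : ZMod n))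
      = ∑ x : ZMod n, ∑ l : Fin k → ZMod n,
          #((range T).filter fun t : ℕ => fl (l + Pi.single i x) y = z + (t : ZMod n)) := by
        simp_rw [hshift]; simp [ZMod.card]
    _ = ∑ l : Fin k → ZMod n, ∑ t ∈ range T,
          #{x : ZMod n | (y i : ZMod n) * x = (z - fl l y) + (t : ZMod n)} := by
        rw [Finset.sum_comm]
        refine Finset.sum_congr rfl fun l _ => ?_
        simp_rw [Finset.card_filter]
        rw [Finset.sum_comm]
        refine Finset.sum_congr rfl fun t _ => Finset.sum_congr rfl fun x _ => ?_
        refine if_congr ?_ rfl rfl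
        rw [fl_add_single, sub_add_eq_add_sub, eq_sub_iff_add_eq']
    _ ≤ ∑ l : Fin k → ZMod n, (T + M) := by
        refine Finset.sum_le_sum fun l _ => ?_
        exact (sum_card_mul_fiber_le (y i) hi _ T).trans (Nat.add_le_add_left (hM i) _)
    _ = n ^ k * (T + M) := by simp [ZMod.card]

/-! ### Counting collisions -/

/-- The integer vector of a point of the index box `[0, M)^k`. -/
def boxVec {k M : ℕ} (y : Fin k → Fin M) : Fin k → ℤ := fun i => ((y i : ℕ) : ℤ)

/-- The thickened image map `(y, t) ↦ f_l(y) + t` on `[0, M)^k × [0, T)`. -/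
def thick {n k : ℕ} [NeZero n] (M T : ℕ) (l : Fin k → ZMod n)
    (p : (Fin k → Fin M) × Fin T) : ZMod n :=
  fl l (boxVec p.1) + ((p.2 : ℕ) : ZMod n)

open Finset in
/-- The number of ordered pairs with equal values of a map. -/
def collisions {α β : Type*} [Fintype α] [DecidableEq β] (g : α → β) : ℕ :=
  ∑ p : α, #{q : α | g p = g q}

open Finset in
lemma card_sq_le_card_image_mul_collisions {α β : Type*} [Fintype α] [DecidableEq β]
    (g : α → β) : Fintype.card α ^ 2 ≤ #(univ.image g) * collisions g := by
  have h1 : Fintype.card α = ∑ x ∈ univ.image g, #{q : α | g q = x} := by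
    rw [← Finset.card_univ]
    exact Finset.card_eq_sum_card_image g univ
  have h2 : collisions g = ∑ x ∈ univ.image g, #{q : α | g q = x} ^ 2 := by
    rw [collisions, ← Finset.sum_fiberwise_of_maps_to (s := univ) (t := univ.image g) (g := g)
      (fun p _ => Finset.mem_image_of_mem g (Finset.mem_univ p))]
    refine Finset.sum_congr rfl fun x _ => ?_
    rw [sq, ← smul_eq_mul, ← Finset.sum_const]
    refine Finset.sum_congr rfl fun p hp => ?_
    have hp' : g p = x := by simpa using hp
    simp_rw [hp', eq_comm]
  rw [h1, h2]
  exact sq_sum_le_card_mul_sum_sq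

open Finset in
lemma sum_collisions_le_s15 {n k : ℕ} [NeZero n] (M T : ℕ) (hT : T ≤ n) :
    n * ∑ l : Fin k → ZMod n, collisions (thick M T l) ≤
      (M ^ k * T) * (n * n ^ k) + (M ^ k * T) * (M ^ k * (n ^ k * (T + M))) := by
  have hfix : ∀ (p : (Fin k → Fin M) × Fin T) (y : Fin k → Fin M),
      n * ∑ l : Fin k → ZMod n, #{t : Fin T | thick M T l p = thick M T l (y, t)} ≤
        (if y = p.1 then n * n ^ k else 0) + n ^ k * (T + M) := by
    rintro ⟨y₁, t₁⟩ y
    split_ifs with h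
    · subst h
      refine le_trans ?_ (Nat.le_add_right _ _)
      refine Nat.mul_le_mul_left _ ?_
      calc _ ≤ ∑ l : Fin k → ZMod n, 1 := by
            refine Finset.sum_le_sum fun l _ => Finset.card_le_one.2 ?_
            intro a ha b hb
            simp only [thick, Finset.mem_filter, Finset.mem_univ, true_and, add_right_inj] at ha hb
            have hab := ha.symm.trans hb
            rw [ZMod.natCast_eq_natCast_iff'] at hab
            rw [Nat.mod_eq_of_lt (a.2.trans_le hT), Nat.mod_eq_of_lt (b.2.trans_le hT)] at hab
            exact Fin.ext hab
        _ = n ^ k := by simp [ZMod.card]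
    · rw [zero_add]
      have hne : boxVec y₁ - boxVec y ≠ 0 := by
        intro h0
        apply h
        funext i
        have := congrFun h0 i
        simp only [boxVec, Pi.sub_apply, Pi.zero_apply] at this
        exact Fin.ext (by dsimp only; omega)
      refine le_trans (le_of_eq ?_)
        (sum_card_fl_window_le (boxVec y₁ - boxVec y) hne M ?_ (-((t₁ : ℕ) : ZMod n)) T)
      · congr 1
        refine Finset.sum_congr rfl fun l _ => ?_
        rw [Finset.card_filter, Finset.card_filter, Finset.sum_range]
        refine Finset.sum_congr rfl fun t _ => if_congr ?_ rfl rfl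
        rw [fl_sub, thick, thick, sub_eq_iff_eq_add]
        constructor <;> intro h
        · linear_combination h
        · linear_combination h
      · intro i
        have h1 := (y i).2
        have h2 := (y₁ i).2
        simp only [boxVec, Pi.sub_apply]
        omega
  calc n * ∑ l : Fin k → ZMod n, collisions (thick M T l)
      = ∑ p : (Fin k → Fin M) × Fin T, ∑ y : Fin k → Fin M,
          n * ∑ l : Fin k → ZMod n, #{t : Fin T | thick M T l p = thick M T l (y, t)} := by
        simp_rw [collisions, ← Finset.mul_sum]
        congr 1
        rw [Finset.sum_comm]
        refine Finset.sum_congr rfl fun p _ => ?_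
        rw [Finset.sum_comm (s := univ (α := Fin k → Fin M))]
        refine Finset.sum_congr rfl fun l _ => ?_
        simp_rw [Finset.card_filter]
        rw [Fintype.sum_prod_type]
    _ ≤ ∑ p : (Fin k → Fin M) × Fin T, ∑ y : Fin k → Fin M,
          ((if y = p.1 then n * n ^ k else 0) + n ^ k * (T + M)) :=
        Finset.sum_le_sum fun p _ => Finset.sum_le_sum fun y _ => hfix p y
    _ = _ := by
        simp_rw [Finset.sum_add_distrib, Finset.sum_ite_eq', Finset.sum_const]
        simp

/-! ### Covering half of the cycle -/

open Finset in
/-- If `f_l` thickened covers more than half of `ZMod n`, differences of the covered set are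
everything, so every orthant box of side at least `2M - 1` has an image within `T` of any
target `z`. -/
lemma exists_near_of_half_covered {n k : ℕ} [NeZero n] (M T m : ℕ) (hm : 2 * M ≤ m + 1)
    (l : Fin k → ZMod n) (hA : n < 2 * #(univ.image (thick M T l)))
    (b : Fin k → ℤ) (hb : IsSign b) (z : ZMod n) :
    ∃ y, inYmb b m y ∧ ∃ t : ℤ, -(T : ℤ) < t ∧ t < T ∧ fl l y = z + (t : ZMod n) := by
  set A := univ.image (thick M T l)
  set y₀ : Fin k → ℤ := fun i => b i * ((M : ℤ) - 1) with hy₀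
  have hB : #(A.image fun a => a + (z - fl l y₀)) = #A :=
    Finset.card_image_of_injective _ (add_left_injective _)
  obtain ⟨x, hx⟩ : (A ∩ A.image fun a => a + (z - fl l y₀)).Nonempty := by
    refine Finset.inter_nonempty_of_card_lt_card_add_card (s := univ) (subset_univ _)
      (subset_univ _) ?_
    rw [hB, Finset.card_univ, ZMod.card]; omega
  obtain ⟨h1, h2⟩ := Finset.mem_inter.1 hx
  obtain ⟨p, -, hp⟩ := Finset.mem_image.1 h1
  obtain ⟨x', hx', hxx'⟩ := Finset.mem_image.1 h2
  obtain ⟨q, -, hq⟩ := Finset.mem_image.1 hx'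
  refine ⟨boxVec p.1 - boxVec q.1 + y₀, ?_, (q.2 : ℤ) - (p.2 : ℤ), by omega, by omega, ?_⟩
  · intro i
    have hpi := (p.1 i).2
    have hqi := (q.1 i).2
    simp only [hy₀, boxVec, Pi.sub_apply, Pi.add_apply]
    rcases hb i with h | h <;> rw [h] <;> constructor <;> omega
  · rw [fl_add, fl_sub]
    simp only [thick] at hp hq
    push_cast
    linear_combination hp - hxx' - hq

open Finset in
/-- Chebyshev-type bound: half of `ZMod n` is covered except with probability at most
`n / (M^k T) + M / T`. -/
lemma card_bad_le_s15 {n k : ℕ} [NeZero n] (M T : ℕ) (hM : 0 < M) (hT0 : 0 < T) (hT : T ≤ n) :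
    (#{l : Fin k → ZMod n | ¬ n < 2 * #(univ.image (thick M T l))} : ℝ) ≤
      (n : ℝ) ^ k * ((n : ℝ) / ((M : ℝ) ^ k * T) + (M : ℝ) / T) := by
  set Bad := univ.filter fun l : Fin k → ZMod n => ¬ n < 2 * #(univ.image (thick M T l)) with hBad
  have hn : 0 < n := Nat.pos_of_ne_zero (NeZero.ne n)
  set Q := M ^ k * T with hQ
  have hcard : Fintype.card ((Fin k → Fin M) × Fin T) = Q := by simp [hQ]
  have hlow : ∀ l : Fin k → ZMod n,
      Q ^ 2 + (if ¬ n < 2 * #(univ.image (thick M T l)) then Q ^ 2 else 0) ≤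
        n * collisions (thick M T l) := by
    intro l
    have h := card_sq_le_card_image_mul_collisions (thick M T l)
    rw [hcard] at h
    by_cases h' : ¬ n < 2 * #(univ.image (thick M T l))
    · rw [if_pos h']
      have : 2 * #(univ.image (thick M T l)) ≤ n := not_lt.1 h'
      nlinarith [Nat.mul_le_mul_right (collisions (thick M T l)) this]
    · rw [if_neg h']
      have h3 : #(univ.image (thick M T l)) ≤ n := by
        simpa [ZMod.card] using Finset.card_le_univ (univ.image (thick M T l))
      nlinarith [Nat.mul_le_mul_right (collisions (thick M T l)) h3]
  have hsum := Finset.sum_le_sum fun l (_ : l ∈ (univ : Finset (Fin k → ZMod n))) => hlow l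
  rw [← Finset.mul_sum, Finset.sum_add_distrib, ← Finset.sum_filter, ← hBad] at hsum
  simp only [Finset.sum_const, Finset.card_univ, Fintype.card_pi, ZMod.card, Finset.prod_const,
    Fintype.card_fin, smul_eq_mul] at hsum
  have hup := hsum.trans (sum_collisions_le_s15 (k := k) M T hT)
  rw [← hQ] at hup
  have hup' : (n : ℝ) ^ k * (Q : ℝ) ^ 2 + (#Bad : ℝ) * (Q : ℝ) ^ 2 ≤
      Q * (n * (n : ℝ) ^ k) + Q * ((M : ℝ) ^ k * ((n : ℝ) ^ k * (T + M))) := by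
    exact_mod_cast hup
  have hMr : (0 : ℝ) < M := by exact_mod_cast hM
  have hTr : (0 : ℝ) < T := by exact_mod_cast hT0
  have hQr : (Q : ℝ) = (M : ℝ) ^ k * T := by rw [hQ]; push_cast; ring
  have hQpos : (0 : ℝ) < Q := by rw [hQr]; positivity
  rw [← hQr]
  have hfin : (#Bad : ℝ) * (Q : ℝ) ^ 2 ≤
      ((n : ℝ) ^ k * ((n : ℝ) / Q + (M : ℝ) / T)) * (Q : ℝ) ^ 2 := by
    have e : ((n : ℝ) ^ k * ((n : ℝ) / Q + (M : ℝ) / T)) * (Q : ℝ) ^ 2 =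
        Q * (n * (n : ℝ) ^ k) + Q * ((M : ℝ) ^ k * ((n : ℝ) ^ k * (T + M)))
          - (n : ℝ) ^ k * (Q : ℝ) ^ 2 := by
      rw [hQr]; field_simp; ring
    linarith
  exact le_of_mul_le_mul_right hfin (by positivity)

/-! ### Growth of the box side -/

open Filter Topology in
lemma tendsto_mOf (k : ℕ) (c : ℝ) (hc : 0 < c) :
    Tendsto (fun n : ℕ => (mOf k c n : ℝ)) atTop atTop := by
  have h : Tendsto (fun n : ℕ => c * (n : ℝ) ^ ((1 : ℝ) / (2 * (k : ℝ) + 2))) atTop atTop :=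
    ((tendsto_rpow_atTop (by positivity)).comp tendsto_natCast_atTop_atTop).const_mul_atTop hc
  exact tendsto_atTop_mono (fun n => Nat.le_ceil _) h

open Filter Topology in
/-- Since `m ≍ n^{1/(2k+2)}`, the power `m^{k+1}` is of order `√n`. -/
lemma tendsto_mOf_pow_div (k : ℕ) (c : ℝ) (hc : 0 < c) :
    Tendsto (fun n : ℕ => (mOf k c n : ℝ) ^ (k + 1) / n) atTop (𝓝 0) := by
  have h : Tendsto (fun n : ℕ => (c + 1) ^ (k + 1) * (n : ℝ) ^ (-(1 / 2) : ℝ)) atTop (𝓝 0) := by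
    have := ((tendsto_rpow_neg_atTop (y := (1 / 2 : ℝ)) (by norm_num)).comp
      tendsto_natCast_atTop_atTop).const_mul ((c + 1) ^ (k + 1))
    simpa using this
  refine squeeze_zero' (Eventually.of_forall fun n => by positivity) ?_ h
  filter_upwards [eventually_ge_atTop 1] with n hn
  have hn' : (1 : ℝ) ≤ n := by exact_mod_cast hn
  have hn0 : (0 : ℝ) < n := by linarith
  set r := (n : ℝ) ^ ((1 : ℝ) / (2 * (k : ℝ) + 2)) with hr
  have hr1 : 1 ≤ r := Real.one_le_rpow hn' (by positivity)
  have hm : (mOf k c n : ℝ) ≤ (c + 1) * r := by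
    have := (Nat.ceil_lt_add_one (a := c * r) (by positivity)).le
    calc (mOf k c n : ℝ) ≤ c * r + 1 := this
      _ ≤ (c + 1) * r := by linarith
  have hrp : r ^ (k + 1) = (n : ℝ) ^ (1 / 2 : ℝ) := by
    rw [hr, ← Real.rpow_natCast, ← Real.rpow_mul hn0.le]
    congr 1
    push_cast
    field_simp
  rw [div_le_iff₀ hn0]
  calc (mOf k c n : ℝ) ^ (k + 1) ≤ ((c + 1) * r) ^ (k + 1) := by gcongr
    _ = (c + 1) ^ (k + 1) * (n : ℝ) ^ (1 / 2 : ℝ) := by rw [mul_pow, hrp]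
    _ = (c + 1) ^ (k + 1) * (n : ℝ) ^ (-(1 / 2) : ℝ) * n := by
        rw [mul_assoc]
        congr 1
        nth_rewrite 3 [← Real.rpow_one (n : ℝ)]
        rw [← Real.rpow_add hn0]
        norm_num

/-! ### Choice of parameters -/

/-- for every `0 < δ₃ < 1` there are `α₃ > 0` and `N` such that for all
`n ≥ N`, with probability at least `1 - δ₃` over `l`: for every sign pattern `b` there are
`y', y'' ∈ Y_m^b` and integers `0 < t', t'' < α₃ s` with `f_l(y') = t' mod n` and
`f_l(y'') = -t'' mod n`, i.e. mapped points on both sides of `0` at distance of order `s`. -/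
theorem points_on_both_sides_of_zero (k : ℕ) (hk : 1 ≤ k) (c : ℝ) (hc : 0 < c)
    (δ₃ : ℝ) (h0 : 0 < δ₃) (h1 : δ₃ < 1) :
    ∃ α₃ : ℝ, 0 < α₃ ∧ ∃ N : ℕ, ∀ (n : ℕ) [NeZero n], N ≤ n →
      1 - δ₃ ≤ lProb n k (fun l =>
        ∀ b : Fin k → ℤ, IsSign b →
          ∃ y' y'' : Fin k → ℤ, inYmb b (mOf k c n) y' ∧ inYmb b (mOf k c n) y'' ∧
            ∃ t' t'' : ℤ,
              0 < t' ∧ (t' : ℝ) < α₃ * sOf k c n ∧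
              0 < t'' ∧ (t'' : ℝ) < α₃ * sOf k c n ∧
              fl l y' = (t' : ZMod n) ∧ fl l y'' = ((-t'' : ℤ) : ZMod n)) := by
  have hα : (0 : ℝ) < 2 ^ (k + 3) / δ₃ := by positivity
  obtain ⟨α, hαdef⟩ : ∃ α : ℝ, α = 2 ^ (k + 3) / δ₃ := ⟨_, rfl⟩
  rw [← hαdef] at hα
  refine ⟨α, hα, ?_⟩
  have hev : ∀ᶠ n : ℕ in Filter.atTop, 1 ≤ n ∧ α / 2 + 1 ≤ (mOf k c n : ℝ) ∧
      (mOf k c n : ℝ) ^ (k + 1) / n < α / 4 * min 1 (δ₃ / 2) := by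
    refine (Filter.eventually_ge_atTop 1).and
      (((tendsto_mOf k c hc).eventually_ge_atTop _).and
        ((tendsto_mOf_pow_div k c hc).eventually_lt_const ?_))
    have : 0 < min 1 (δ₃ / 2) := lt_min one_pos (by linarith)
    positivity
  obtain ⟨N, hN⟩ := Filter.eventually_atTop.1 hev
  refine ⟨N, fun n _ hn => ?_⟩
  obtain ⟨hn1, hmα, hmn⟩ := hN n hn
  set m := mOf k c n with hm
  set s := sOf k c n with hs
  have hsdef : s = (n : ℝ) / (m : ℝ) ^ k := rfl
  have hn0 : (0 : ℝ) < n := by exact_mod_cast hn1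
  have hm1 : (1 : ℝ) ≤ m := by linarith
  have hm0 : (0 : ℝ) < m := by linarith
  have hs0 : 0 < s := by rw [hsdef]; positivity
  have hms : (m : ℝ) ^ (k + 1) / n = m / s := by
    rw [hsdef, pow_succ]; field_simp
  rw [hms, div_lt_iff₀ hs0] at hmn
  have hmn1 : (m : ℝ) ≤ α / 4 * s := by
    have : α / 4 * min 1 (δ₃ / 2) * s ≤ α / 4 * 1 * s := by gcongr; exact min_le_left _ _
    linarith
  have hmn2 : (m : ℝ) ≤ α / 4 * (δ₃ / 2) * s := by
    have : α / 4 * min 1 (δ₃ / 2) * s ≤ α / 4 * (δ₃ / 2) * s := by gcongr; exact min_le_right _ _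
    linarith
  -- The half-size box side `M` satisfies `2M - 1 ≤ m`; the window `T` satisfies `2T ≤ αs`.
  set M := (m + 1) / 2 with hM
  set T := ⌊α * s / 2⌋₊ with hT
  have hmnat : 1 ≤ m := by exact_mod_cast hm1
  have hMpos : 0 < M := by omega
  have hMlow : (m : ℝ) / 2 ≤ M := by
    have : m ≤ 2 * M := by omega
    have : (m : ℝ) ≤ 2 * M := by exact_mod_cast this
    linarith
  have hMup : (M : ℝ) ≤ m := by
    have : M ≤ m := by omega
    exact_mod_cast this
  have hTup : (T : ℝ) ≤ α * s / 2 := Nat.floor_le (by positivity)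
  have hTlow : α * s / 4 ≤ T := by
    have := Nat.lt_floor_add_one (α * s / 2)
    linarith
  have hTpos' : (0 : ℝ) < T := lt_of_lt_of_le (by positivity) hTlow
  have hTpos : 0 < T := by exact_mod_cast hTpos'
  have hTn : T ≤ n := by
    have h2 : (m : ℝ) ≤ (m : ℝ) ^ k := le_self_pow₀ hm1 (by omega)
    have h3 : α / 2 * s ≤ n := by
      rw [hsdef, mul_div_assoc', div_le_iff₀ (by positivity), mul_comm]
      gcongr
      linarith
    have : (T : ℝ) ≤ n := by linarith
    exact_mod_cast this
  have hbad := card_bad_le_s15 (n := n) (k := k) M T hMpos hTpos hTn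
  have hq1 : (n : ℝ) / ((M : ℝ) ^ k * T) ≤ δ₃ / 2 := by
    rw [div_le_iff₀ (by positivity)]
    calc (n : ℝ) = δ₃ / 2 * (((m : ℝ) / 2) ^ k * (α * s / 4)) := by
          rw [hsdef, hαdef, div_pow, pow_add]; field_simp; norm_num
      _ ≤ δ₃ / 2 * ((M : ℝ) ^ k * T) := by gcongr
  have hq2 : (M : ℝ) / T ≤ δ₃ / 2 := by
    rw [div_le_iff₀ hTpos']
    calc (M : ℝ) ≤ α / 4 * (δ₃ / 2) * s := hMup.trans hmn2
      _ = δ₃ / 2 * (α * s / 4) := by ring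
      _ ≤ δ₃ / 2 * T := by gcongr
  have hbad' := hbad.trans (mul_le_mul_of_nonneg_left
    (show _ ≤ δ₃ by linarith) (by positivity : (0 : ℝ) ≤ (n : ℝ) ^ k))
  have hcardl : (Fintype.card (Fin k → ZMod n) : ℝ) = (n : ℝ) ^ k := by simp [ZMod.card]
  have hcompl := Finset.card_filter_add_card_filter_not
    (s := (Finset.univ : Finset (Fin k → ZMod n)))
    (fun l => n < 2 * (Finset.univ.image (thick M T l)).card)
  rw [Finset.card_univ] at hcompl
  have hcompl' : (((Finset.univ.filter fun l : Fin k → ZMod n =>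
      n < 2 * (Finset.univ.image (thick M T l)).card).card : ℕ) : ℝ) +
      (((Finset.univ.filter fun l : Fin k → ZMod n =>
      ¬ n < 2 * (Finset.univ.image (thick M T l)).card).card : ℕ) : ℝ) = (n : ℝ) ^ k := by
    rw [← hcardl]; exact_mod_cast hcompl
  rw [lProb, hcardl, le_div_iff₀ (by positivity)]
  refine le_trans (b := (((Finset.univ.filter fun l : Fin k → ZMod n =>
      n < 2 * (Finset.univ.image (thick M T l)).card).card : ℕ) : ℝ)) (by linarith) ?_
  refine Nat.cast_le.2 (Finset.card_le_card ?_)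
  intro l hl
  have hA := (Finset.mem_filter.1 hl).2
  refine Finset.mem_filter.2 ⟨Finset.mem_univ _, fun b hb => ?_⟩
  obtain ⟨y', hy', t', ht1, ht2, he'⟩ :=
    exists_near_of_half_covered M T m (by omega) l hA b hb (T : ZMod n)
  obtain ⟨y'', hy'', t'', ht1', ht2', he''⟩ :=
    exists_near_of_half_covered M T m (by omega) l hA b hb (-(T : ZMod n))
  have hlt : ∀ t : ℤ, t < T → ((T + t : ℤ) : ℝ) < α * s := by
    intro t ht
    have : (t : ℝ) < T := by exact_mod_cast ht
    push_cast
    linarith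
  refine ⟨y', y'', hy', hy'', T + t', T + -t'', by omega, hlt _ ht2, by omega,
    hlt _ (by omega), ?_, ?_⟩
  · rw [he']; push_cast; ring
  · rw [he'']; push_cast; ring
end
end
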